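/- arXiv:1603.01368 — 10 statements merged into one kernel-verified Lean document; each statement's English description precedes it below -/
import Mathlib

section
/- Let $k$ be an even positive integer. Then there exist infinitely many connected cubic arc-transitive $k$-circulant graphs; that is, for every positive integer $n$ there exists a finite connected simple graph $\Gamma$ with more than $n$ vertices such that every vertex of $\Gamma$ has degree $3$, the automorphism group of $\Gamma$ acts transitively on the ordered pairs of adjacent vertices, and the automorphism group of $\Gamma$ contains a cyclic subgroup that is semiregular on the vertices and has exactly $k$ orbits on the vertices. -/
/-!
The graphs are honeycomb graphs on a torus. Let `A` be a finite quotient of the Eisenstein integers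
`ℤ[ω]` by an ideal, and join `(a, false)` to `(b, true)` in `A × Bool` when
`b - a ∈ {0, 1, 1 + ω}`. Translations by `A` and the map `(a, i) ↦ (-a, !i)` act transitively on
the vertices, and since `ω • {0, 1, 1 + ω} + 1 = {0, 1, 1 + ω}` there is an automorphism fixing
`(0, false)` and rotating its three neighbours; hence the graph is arc-transitive
(`haar_exists_aut`). It is connected because the differences of elements of `{0, 1, 1 + ω}` generate
`A` (`haar_connected`). Translation by an element of additive order `m` generates a cyclic
semiregular group with `2 |A| / m` orbits (`haar_circulant`).

For `k = 2 t`, the ideal is generated by `t (r - ω)`. With `N = r ^ 2 + r + 1`, the norm of `r - ω`,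
and with respect to the `ℤ`-basis `1, r - ω`, the quotient is `ZMod (t * N) × ZMod t`, on which `ω`
acts by `(x, y) ↦ (r x + N y, -x - (r + 1) y)`. The element `1 = (1, 0)` has order `t * N`, so there
are `2 t ^ 2 N / (t N) = k` orbits, and `r` can be taken arbitrarily large.
-/

/-- A permutation `g` of the vertices is an automorphism of the graph `Γ`. -/
def IsGraphAut {V : Type*} (Γ : SimpleGraph V) (g : Equiv.Perm V) : Prop :=
  ∀ a b : V, Γ.Adj (g a) (g b) ↔ Γ.Adj a b

/-- A group action is semiregular if only the identity fixes a point. -/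
def IsSemiregular (G V : Type*) [Group G] [MulAction G V] : Prop :=
  ∀ g : G, (∃ v : V, g • v = v) → g = 1

section Haar

variable {A : Type} [AddCommGroup A]

/-- `b - a` lies in the connection set `{0, e, e + w e}`. -/
def HaarRel (w : A →+ A) (e a b : A) : Prop :=
  b = a ∨ b = a + e ∨ b = a + (e + w e)

/-- The bipartite graph (Haar graph) on `A × Bool` with connection set `{0, e, e + w e}`;
`w` plays the role of multiplication by a primitive cube root of unity and `e` that of `1`. -/
def haarGraph (w : A →+ A) (e : A) : SimpleGraph (A × Bool) where
  Adj u v := (u.2 = false ∧ v.2 = true ∧ HaarRel w e u.1 v.1) ∨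
    (u.2 = true ∧ v.2 = false ∧ HaarRel w e v.1 u.1)
  symm := ⟨fun u v h => by tauto⟩
  loopless := ⟨fun u h => by rcases h with ⟨h1, h2, _⟩ | ⟨h1, h2, _⟩ <;> simp [h1] at h2⟩

variable (w : A →+ A) (e : A)

@[simp] lemma haar_adj_ft (a b : A) :
    (haarGraph w e).Adj (a, false) (b, true) ↔ HaarRel w e a b := by simp [haarGraph]

@[simp] lemma haar_adj_tf (a b : A) :
    (haarGraph w e).Adj (a, true) (b, false) ↔ HaarRel w e b a := by simp [haarGraph]

@[simp] lemma haar_adj_ff (a b : A) : ¬ (haarGraph w e).Adj (a, false) (b, false) := by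
  simp [haarGraph]

@[simp] lemma haar_adj_tt (a b : A) : ¬ (haarGraph w e).Adj (a, true) (b, true) := by
  simp [haarGraph]

/-- Translation by `c`. -/
def haarTrans (c : A) : Equiv.Perm (A × Bool) where
  toFun u := (u.1 + c, u.2)
  invFun u := (u.1 - c, u.2)
  left_inv u := by simp
  right_inv u := by simp

/-- The involution `(a, i) ↦ (-a, !i)`, which exchanges the two parts. -/
def haarSwap : Equiv.Perm (A × Bool) where
  toFun u := (-u.1, !u.2)
  invFun u := (-u.1, !u.2)
  left_inv u := by simp
  right_inv u := by simp

variable {w} in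
lemma w_cube (hw : ∀ a, w (w a) + w a + a = 0) (a : A) : w (w (w a)) = a := by
  have h1 := hw (w a)
  have h2 := hw a
  have : w (w (w a)) - a = (w (w (w a)) + w (w a) + w a) - (w (w a) + w a + a) := by abel
  rw [h1, h2, sub_zero] at this
  exact sub_eq_zero.mp this

/-- The rotation `(a, false) ↦ (w a, false)`, `(b, true) ↦ (w b + e, true)`, which fixes `(0, false)`
and permutes its three neighbours cyclically. -/
def haarRot (hw : ∀ a, w (w a) + w a + a = 0) : Equiv.Perm (A × Bool) where
  toFun u := (w u.1 + (if u.2 then e else 0), u.2)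
  invFun u := (w (w (u.1 - (if u.2 then e else 0))), u.2)
  left_inv u := by simp [w_cube hw]
  right_inv u := by simp [w_cube hw]

lemma isGraphAut_mul {V : Type*} {Γ : SimpleGraph V} {g h : Equiv.Perm V}
    (hg : IsGraphAut Γ g) (hh : IsGraphAut Γ h) : IsGraphAut Γ (g * h) :=
  fun a b => (hg (h a) (h b)).trans (hh a b)

lemma isGraphAut_inv {V : Type*} {Γ : SimpleGraph V} {g : Equiv.Perm V}
    (hg : IsGraphAut Γ g) : IsGraphAut Γ g⁻¹ := fun a b => by
  simpa using (hg (g⁻¹ a) (g⁻¹ b)).symm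

/-- The automorphism group, used to handle powers of automorphisms. -/
def graphAut {V : Type*} (Γ : SimpleGraph V) : Subgroup (Equiv.Perm V) where
  carrier := {g | IsGraphAut Γ g}
  mul_mem' := isGraphAut_mul
  one_mem' := fun _ _ => Iff.rfl
  inv_mem' := isGraphAut_inv

lemma haarTrans_aut (c : A) : IsGraphAut (haarGraph w e) (haarTrans c) := by
  have key : ∀ a b, HaarRel w e (a + c) (b + c) ↔ HaarRel w e a b := fun a b => by
    simp [HaarRel, add_right_comm _ c]
  rintro ⟨a, _ | _⟩ ⟨b, _ | _⟩ <;> simp [haarTrans, key]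

lemma haarSwap_aut : IsGraphAut (haarGraph w e) haarSwap := by
  have key : ∀ a b, HaarRel w e (-b) (-a) ↔ HaarRel w e a b := fun a b => by
    have h : ∀ s : A, (-a = -b + s ↔ b = a + s) := fun s => by
      constructor <;> intro h
      · rw [← neg_neg a, h]; abel
      · rw [h]; abel
    simp [HaarRel, h, eq_comm]
  rintro ⟨a, _ | _⟩ ⟨b, _ | _⟩ <;> simp [haarSwap, key]

lemma haarRot_aut (hw : ∀ a, w (w a) + w a + a = 0) :
    IsGraphAut (haarGraph w e) (haarRot w e hw) := by
  have hinj : Function.Injective w := fun a b h => by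
    rw [← w_cube hw a, ← w_cube hw b, h]
  have h2 : w (w e) + e + w e = 0 := by rw [← hw e]; abel
  -- the three displacements `0, e, e + w e` are sent to `e, e + w e, 0`
  have key : ∀ a b, HaarRel w e (w a) (w b + e) ↔ HaarRel w e a b := fun a b => by
    have e1 : w b + e = w a ↔ b = a + (e + w e) := by
      rw [← hinj.eq_iff (a := b), map_add, map_add]
      constructor <;> intro h
      · rw [← h]
        calc w b = w b + (w (w e) + e + w e) := by rw [h2, add_zero]
          _ = _ := by abel
      · rw [h]
        calc _ = w a + (w (w e) + e + w e) := by abel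
          _ = _ := by rw [h2, add_zero]
    have e2 : w b + e = w a + e ↔ b = a := by rw [add_left_inj, hinj.eq_iff]
    have e3 : w b + e = w a + (e + w e) ↔ b = a + e := by
      rw [add_comm e (w e), ← add_assoc, add_left_inj, ← map_add, hinj.eq_iff]
    unfold HaarRel
    rw [e1, e2, e3]
    tauto
  rintro ⟨a, _ | _⟩ ⟨b, _ | _⟩ <;> simp [haarRot, key]

/-- Every arc is the image of the base arc `((0, false), (0, true))`. -/
lemma haar_exists_aut (hw : ∀ a, w (w a) + w a + a = 0) (u v : A × Bool)
    (h : (haarGraph w e).Adj u v) :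
    ∃ g, IsGraphAut (haarGraph w e) g ∧ g (0, false) = u ∧ g (0, true) = v := by
  have main : ∀ a b, HaarRel w e a b → ∃ g, IsGraphAut (haarGraph w e) g ∧
      g (0, false) = (a, false) ∧ g (0, true) = (b, true) := by
    intro a b hab
    have hT := haarTrans_aut w e a
    have hR := haarRot_aut w e hw
    rcases hab with rfl | rfl | rfl
    · exact ⟨_, hT, by simp [haarTrans], by simp [haarTrans]⟩
    · exact ⟨_, isGraphAut_mul hT hR, by simp [haarTrans, haarRot],
        by simp [haarTrans, haarRot, add_comm]⟩
    · refine ⟨_, isGraphAut_mul hT (isGraphAut_mul hR hR), by simp [haarTrans, haarRot], ?_⟩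
      simp only [haarTrans, haarRot, Equiv.Perm.mul_apply, Equiv.coe_fn_mk, if_true, map_zero,
        zero_add, Prod.mk.injEq, and_true]
      abel
  obtain ⟨a, _ | _⟩ := u <;> obtain ⟨b, _ | _⟩ := v <;> simp at h
  · exact main a b h
  · obtain ⟨g, hg, h1, h2⟩ := main b a h
    exact ⟨g * haarSwap, isGraphAut_mul hg (haarSwap_aut w e), by simp [haarSwap, h2],
      by simp [haarSwap, h1]⟩

lemma haar_arc_transitive (hw : ∀ a, w (w a) + w a + a = 0) (u v x y : A × Bool)
    (h : (haarGraph w e).Adj u v) (h' : (haarGraph w e).Adj x y) :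
    ∃ g, IsGraphAut (haarGraph w e) g ∧ g u = x ∧ g v = y := by
  obtain ⟨g, hg, rfl, rfl⟩ := haar_exists_aut w e hw u v h
  obtain ⟨g', hg', rfl, rfl⟩ := haar_exists_aut w e hw x y h'
  exact ⟨g' * g⁻¹, isGraphAut_mul hg' (isGraphAut_inv hg), by simp, by simp⟩

lemma haar_connected (hgen : AddSubgroup.closure {e, w e} = ⊤) : (haarGraph w e).Connected := by
  have h0 : ∀ a, (haarGraph w e).Reachable (a, false) (a, true) := fun a =>
    SimpleGraph.Adj.reachable (by simp [HaarRel])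
  have h1 : ∀ a, (haarGraph w e).Reachable (a, false) (a + e, true) := fun a =>
    SimpleGraph.Adj.reachable (by simp [HaarRel])
  have h2 : ∀ a, (haarGraph w e).Reachable (a, false) (a + (e + w e), true) := fun a =>
    SimpleGraph.Adj.reachable (by simp [HaarRel])
  have key : ∀ x ∈ AddSubgroup.closure {e, w e}, ∀ a,
      (haarGraph w e).Reachable (a, false) (a + x, false) := by
    intro x hx
    induction hx using AddSubgroup.closure_induction with
    | mem x hx =>
      intro a
      rcases hx with rfl | rfl
      · exact (h1 a).trans (h0 _).symm
      · refine (h2 a).trans ?_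
        have := h1 (a + w e)
        rw [add_assoc, add_comm (w e)] at this
        exact this.symm
    | zero => intro a; simp
    | add x y _ _ hx hy => intro a; rw [← add_assoc]; exact (hx a).trans (hy _)
    | neg x _ hx => intro a; simpa using (hx (a + -x)).symm
  have base : ∀ u : A × Bool, (haarGraph w e).Reachable (0, false) u := by
    rintro ⟨a, i⟩
    have h := key a (by simp [hgen]) 0
    rw [zero_add] at h
    cases i
    · exact h
    · exact h.trans (h0 a)
  have : Nonempty (A × Bool) := ⟨(0, false)⟩
  exact ⟨fun u v => (base u).symm.trans (base v)⟩

lemma haar_cubic (hw : ∀ a, w (w a) + w a + a = 0) (he : e ≠ 0) (v : A × Bool) :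
    Nat.card ((haarGraph w e).neighborSet v) = 3 := by
  have hz : ∀ a, w a = 0 → a = 0 := fun a h => by rw [← w_cube hw a, h]; simp
  have hwe : w e ≠ 0 := fun h => he (hz e h)
  have hewe : e + w e ≠ 0 := fun h => hwe (hz _ (by
    have := hw e
    rwa [add_assoc, add_comm (w e), h, add_zero] at this))
  rw [Nat.card_coe_set_eq, Set.ncard_eq_three]
  obtain ⟨a, _ | _⟩ := v
  · refine ⟨(a, true), (a + e, true), (a + (e + w e), true), by simpa using he, by simpa using hewe,
      by simpa using hwe, ?_⟩
    ext ⟨b, _ | _⟩ <;> simp [HaarRel]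
  · refine ⟨(a, false), (a - e, false), (a - (e + w e), false), ?_, ?_, ?_, ?_⟩
    · rw [Ne, Prod.mk.injEq, eq_comm (a := a), sub_eq_self]
      tauto
    · rw [Ne, Prod.mk.injEq, eq_comm (a := a), sub_eq_self]
      tauto
    · intro h
      rw [Prod.mk.injEq, sub_right_inj] at h
      exact hwe (by simpa using h.1)
    · ext ⟨b, _ | _⟩
      · simp [HaarRel, eq_sub_iff_add_eq, eq_comm]
      · simp

lemma haarTrans_zpow (c : A) (j : ℤ) : haarTrans c ^ j = haarTrans (j • c) := by
  let f : Multiplicative A →* Equiv.Perm (A × Bool) :=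
    { toFun := fun x => haarTrans x.toAdd
      map_one' := by ext u <;> simp [haarTrans]
      map_mul' := fun x y => by ext u <;> simp [haarTrans, add_comm, add_left_comm] }
  exact (map_zpow f (Multiplicative.ofAdd c) j).symm

lemma haarTrans_eq_one_iff (c : A) : haarTrans c = 1 ↔ c = 0 := by
  constructor
  · intro h
    simpa [haarTrans] using congrArg Prod.fst (DFunLike.congr_fun h ((0 : A), false))
  · rintro rfl
    ext u <;> simp [haarTrans]

/-- Translation by `e` generates a semiregular cyclic group with `2 |A| / m` orbits, where `m` is
the order of `e`. -/
lemma haar_circulant [Finite A] :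
    ∃ C : Subgroup (Equiv.Perm (A × Bool)),
      (∀ g ∈ C, IsGraphAut (haarGraph w e) g) ∧ IsCyclic ↥C ∧ IsSemiregular ↥C (A × Bool) ∧
      Nat.card (MulAction.orbitRel.Quotient ↥C (A × Bool)) * addOrderOf e = Nat.card A * 2 := by
  have hfree : IsSemiregular (Subgroup.zpowers (haarTrans e)) (A × Bool) := by
    rintro ⟨g, hg⟩ ⟨v, hv⟩
    obtain ⟨j, rfl⟩ := Subgroup.mem_zpowers_iff.mp hg
    rw [Subtype.ext_iff]
    simp only [haarTrans_zpow, Subgroup.mk_smul, Equiv.Perm.smul_def] at hv ⊢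
    rw [Subgroup.coe_one, haarTrans_eq_one_iff]
    simpa [haarTrans] using congrArg Prod.fst hv
  have hord : orderOf (haarTrans e) = addOrderOf e := by
    refine Nat.dvd_antisymm (orderOf_dvd_of_pow_eq_one ?_) (addOrderOf_dvd_of_nsmul_eq_zero ?_)
    · rw [← zpow_natCast, haarTrans_zpow, haarTrans_eq_one_iff, natCast_zsmul, addOrderOf_nsmul_eq_zero]
    · rw [← natCast_zsmul, ← haarTrans_eq_one_iff, ← haarTrans_zpow, zpow_natCast, pow_orderOf_eq_one]
  refine ⟨Subgroup.zpowers (haarTrans e), fun g hg => ?_, inferInstance, hfree, ?_⟩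
  · exact (Subgroup.zpowers_le (H := graphAut (haarGraph w e))).mpr (haarTrans_aut w e e) hg
  · have hst : ∀ v : A × Bool,
        MulAction.stabilizer (Subgroup.zpowers (haarTrans e)) v = ⊥ := fun v =>
      (Subgroup.eq_bot_iff_forall _).mpr fun g hg => hfree g ⟨v, hg⟩
    have := Nat.card_congr (MulAction.selfEquivOrbitsQuotientProd hst)
    rw [Nat.card_prod, Nat.card_prod, Nat.card_zpowers, hord] at this
    simpa using this.symm

end Haar

section Eisenstein

variable (t N : ℕ)

/-- The homomorphism `ZMod t → ZMod (t * N)`, `y ↦ N y`. -/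
def mulN : ZMod t →+ ZMod (t * N) :=
  ZMod.lift t ⟨(AddMonoidHom.mulLeft (N : ZMod (t * N))).comp (Int.castAddHom _), by
    simpa [mul_comm, -CharP.cast_eq_zero] using ZMod.natCast_self (t * N)⟩

lemma mulN_intCast (y : ℤ) : mulN t N y = N * (y : ZMod (t * N)) := by
  simp [mulN]

/-- Multiplication by `ω` on `ℤ[ω] / (t (r - ω))` in the basis `1, r - ω`, where
`N = r ^ 2 + r + 1`. -/
def eisW (r : ℕ) : ZMod (t * N) × ZMod t →+ ZMod (t * N) × ZMod t where
  toFun p := (r * p.1 + mulN t N p.2, -ZMod.castHom (dvd_mul_right t N) (ZMod t) p.1 - (r + 1) * p.2)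
  map_zero' := by simp
  map_add' p q := by
    ext
    · simp only [Prod.fst_add, Prod.snd_add, map_add]; ring
    · simp only [Prod.fst_add, Prod.snd_add, map_add]; ring

lemma eisW_intCast (r : ℕ) (x y : ℤ) :
    eisW t N r ((x : ZMod (t * N)), (y : ZMod t)) =
      (((r * x + N * y : ℤ) : ZMod (t * N)), ((-x - (r + 1) * y : ℤ) : ZMod t)) := by
  simp [eisW, mulN_intCast]

lemma eisW_rel (r : ℕ) (hN : N = r ^ 2 + r + 1) (p : ZMod (t * N) × ZMod t) :
    eisW t N r (eisW t N r p) + eisW t N r p + p = 0 := by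
  obtain ⟨x, y⟩ := p
  obtain ⟨x, rfl⟩ := ZMod.intCast_surjective x
  obtain ⟨y, rfl⟩ := ZMod.intCast_surjective y
  have hN' : (N : ℤ) = r ^ 2 + r + 1 := by exact_mod_cast hN
  simp only [eisW_intCast, Prod.mk_add_mk, ← Int.cast_add]
  rw [Prod.mk_eq_zero]
  constructor
  · rw [← Int.cast_zero]; congr 1; rw [hN']; ring
  · rw [← Int.cast_zero]; congr 1; rw [hN']; ring

lemma eisW_gen (r : ℕ) : AddSubgroup.closure {(1, 0), eisW t N r (1, 0)} = ⊤ := by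
  rw [eq_top_iff]
  rintro ⟨x, y⟩ -
  obtain ⟨x, rfl⟩ := ZMod.intCast_surjective x
  obtain ⟨y, rfl⟩ := ZMod.intCast_surjective y
  -- `x + y (r - ω) = (x + y r) - y ω`
  have h : ((x : ZMod (t * N)), (y : ZMod t)) =
      (x + y * r) • (1, 0) + (-y) • eisW t N r (1, 0) := by
    have := eisW_intCast t N r 1 0
    simp only [Int.cast_one, Int.cast_zero] at this
    rw [this]
    ext <;> simp
  rw [h]
  exact add_mem (zsmul_mem (AddSubgroup.subset_closure (by simp)) _)
    (zsmul_mem (AddSubgroup.subset_closure (by simp)) _)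

lemma addOrderOf_eis : addOrderOf ((1, 0) : ZMod (t * N) × ZMod t) = t * N := by
  rw [Prod.addOrderOf_mk, ZMod.addOrderOf_one, addOrderOf_zero, Nat.lcm_one_right]

end Eisenstein

/-- If `k` is an even positive integer, then there exist infinitely many
cubic arc-transitive `k`-circulants. -/
theorem cubic_arc_transitive_k_circulant_infinite_of_even
    (k : ℕ) (hk : 0 < k) (hke : Even k) (n : ℕ) :
    ∃ (V : Type) (_ : Fintype V) (Γ : SimpleGraph V),
      n < Nat.card V ∧
      Γ.Connected ∧
      (∀ v : V, Nat.card (Γ.neighborSet v) = 3) ∧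
      (∀ u v x y : V, Γ.Adj u v → Γ.Adj x y →
        ∃ g : Equiv.Perm V, IsGraphAut Γ g ∧ g u = x ∧ g v = y) ∧
      ∃ C : Subgroup (Equiv.Perm V),
        (∀ g ∈ C, IsGraphAut Γ g) ∧ IsCyclic ↥C ∧ IsSemiregular ↥C V ∧
        Nat.card (MulAction.orbitRel.Quotient ↥C V) = k := by
  obtain ⟨t, rfl⟩ := hke
  have ht : 0 < t := by omega
  -- `r = n + 1` makes `N`, hence the graph, large
  obtain ⟨N, hN⟩ : ∃ N, N = (n + 1) ^ 2 + (n + 1) + 1 := ⟨_, rfl⟩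
  have hnN : n + 1 < N := by rw [hN]; nlinarith [sq_nonneg (n + 1)]
  have htN : N ≤ t * N := Nat.le_mul_of_pos_left N ht
  have : NeZero t := ⟨ht.ne'⟩
  have : NeZero (t * N) := ⟨by omega⟩
  have hw := eisW_rel t N (n + 1) hN
  have : Fact (1 < t * N) := ⟨by omega⟩
  have hcard : Nat.card (ZMod (t * N) × ZMod t) = t * N * t := by simp
  obtain ⟨C, h1, h2, h3, h4⟩ := haar_circulant (eisW t N (n + 1)) (1, 0)
  refine ⟨(ZMod (t * N) × ZMod t) × Bool, inferInstance, haarGraph (eisW t N (n + 1)) (1, 0), ?_,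
    haar_connected _ _ (eisW_gen t N _), haar_cubic _ _ hw (by simp),
    haar_arc_transitive _ _ hw, C, h1, h2, h3, ?_⟩
  · rw [Nat.card_prod, hcard]
    have : t * N ≤ t * N * t := Nat.le_mul_of_pos_right _ ht
    simp only [Nat.card_eq_fintype_card, Fintype.card_bool]
    omega
  · rw [addOrderOf_eis, hcard] at h4
    refine Nat.eq_of_mul_eq_mul_right (show 0 < t * N by omega) (h4.trans ?_)
    ring
end

section
/- Let $k$ be an odd positive integer. Then there exists a finite connected cubic arc-transitive graph with exactly $6k^2$ vertices whose automorphism group contains a cyclic subgroup that is semiregular on the vertices with exactly $k$ orbits; that is, there exists a cubic arc-transitive $k$-circulant of order $6k^2$. -/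
namespace HoneycombTorus

variable {k : ℕ}

/-- The group `ℤ[ω] / k(1 - ω)ℤ[ω]`, in which `(m, n)` stands for `m + n(1 - ω)`. -/
abbrev A (k : ℕ) : Type := ZMod (3 * k) × ZMod k

/-- Reduction modulo `k`. -/
def red (k : ℕ) : ZMod (3 * k) →+ ZMod k :=
  (ZMod.castHom (dvd_mul_left k 3) (ZMod k)).toAddMonoidHom

lemma zmultiplesHom_three : zmultiplesHom (ZMod (3 * k)) 3 k = 0 := by
  have h : ((3 * k : ℕ) : ZMod (3 * k)) = 0 := ZMod.natCast_self _
  push_cast at h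
  simpa [mul_comm] using h

/-- The homomorphism `ℤ/k → ℤ/3k` sending the class of `n` to the class of `3n`. -/
def triple (k : ℕ) : ZMod k →+ ZMod (3 * k) :=
  ZMod.lift k ⟨zmultiplesHom (ZMod (3 * k)) 3, zmultiplesHom_three⟩

@[simp] lemma red_one : red k 1 = 1 := map_one (ZMod.castHom (dvd_mul_left k 3) (ZMod k))

@[simp] lemma triple_one : triple k 1 = 3 := by
  have := ZMod.lift_coe k ⟨zmultiplesHom (ZMod (3 * k)) 3, zmultiplesHom_three⟩ 1
  simpa [triple] using this

@[simp] lemma triple_red (m : ZMod (3 * k)) : triple k (red k m) = 3 * m := by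
  obtain ⟨m, rfl⟩ := ZMod.intCast_surjective m
  have : (m : ZMod (3 * k)) = m • 1 := by simp
  rw [this, map_zsmul, map_zsmul, red_one, triple_one]
  simp [mul_comm]

@[simp] lemma red_triple (n : ZMod k) : red k (triple k n) = 3 * n := by
  obtain ⟨n, rfl⟩ := ZMod.intCast_surjective n
  have h3 : (3 : ZMod (3 * k)) = 3 • 1 := by simp
  have : (n : ZMod k) = n • 1 := by simp
  rw [this, map_zsmul, map_zsmul, triple_one, h3, map_nsmul, red_one]
  simp [mul_comm]

/-- Multiplication by `ω` on `A k`: `1 ↦ ω = 1 - (1 - ω)` and `1 - ω ↦ 3 - 2(1 - ω)`. The inverse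
is multiplication by `ω²`. -/
def rot (k : ℕ) : A k ≃+ A k where
  toFun a := (a.1 + triple k a.2, - red k a.1 - 2 * a.2)
  invFun a := (-2 * a.1 - triple k a.2, red k a.1 + a.2)
  left_inv a := by
    have h2 : ∀ n, triple k (2 * n) = 2 * triple k n := fun n => by simp [two_mul]
    ext <;> simp [h2] <;> ring
  right_inv a := by
    have h2 : ∀ n, red k (2 * n) = 2 * red k n := fun n => by simp [two_mul]
    ext <;> simp [h2] <;> ring
  map_add' a b := by ext <;> simp <;> ring

/-- Complex conjugation on `A k`: it fixes `1` and sends `1 - ω` to `3 - (1 - ω)`. -/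
def conj (k : ℕ) : A k →+ A k where
  toFun a := (a.1 + triple k a.2, - a.2)
  map_zero' := by simp
  map_add' a b := by ext <;> simp <;> ring

@[simp] lemma conj_conj (a : A k) : conj k (conj k a) = a := by
  ext <;> simp [conj]

/-- The element `1` of `ℤ[ω]`. -/
def e (k : ℕ) : A k := (1, 0)

/-- The element `1 + ω = 2 - (1 - ω)` of `ℤ[ω]`. -/
def f (k : ℕ) : A k := (2, -1)

lemma rot_e : rot k (e k) + e k = f k := by
  ext <;> simp [rot, e, f, one_add_one_eq_two]

lemma rot_f : rot k (f k) + e k = 0 := by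
  have h2 : red k 2 = 2 := by rw [← one_add_one_eq_two, map_add, red_one, one_add_one_eq_two]
  ext <;> simp [rot, e, f, h2]; norm_num

lemma conj_e : conj k (e k) = e k := by
  ext <;> simp [conj, e]

lemma conj_f : conj k (f k) = e k - f k := by
  ext <;> simp [conj, e, f]; norm_num

/-- The differences between adjacent downward and upward triangles. -/
def S (k : ℕ) : Set (A k) := {0, e k, f k}

lemma mem_S {a : A k} : a ∈ S k ↔ a = 0 ∨ a = e k ∨ a = f k := Iff.rfl

lemma rot_mem_S {a : A k} : rot k a + e k ∈ S k ↔ a ∈ S k := by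
  have h0 : rot k a + e k = 0 ↔ a = f k := by
    rw [← rot_f, add_left_inj, (rot k).injective.eq_iff]
  have h1 : rot k a + e k = e k ↔ a = 0 := by simp
  have h2 : rot k a + e k = f k ↔ a = e k := by
    rw [← rot_e, add_left_inj, (rot k).injective.eq_iff]
  rw [mem_S, mem_S, h0, h1, h2]; tauto

lemma sub_conj_mem_S_of_mem {a : A k} (h : a ∈ S k) : e k - conj k a ∈ S k := by
  rcases h with rfl | rfl | rfl
  · simp [mem_S]
  · simp [mem_S, conj_e]
  · simp [mem_S, conj_f]

lemma sub_conj_mem_S {a : A k} : e k - conj k a ∈ S k ↔ a ∈ S k := by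
  refine ⟨fun h => ?_, sub_conj_mem_S_of_mem⟩
  -- `a ↦ e - conj a` is an involution because `conj` fixes `e`
  simpa [conj_e] using sub_conj_mem_S_of_mem h

lemma ncard_S (hk : 0 < k) : (S k).ncard = 3 := by
  have key : ∀ n : ℕ, 0 < n → n < 3 → ((n : ℕ) : ZMod (3 * k)) ≠ 0 := by
    intro n h0 h3 h
    rw [ZMod.natCast_eq_zero_iff] at h
    have := Nat.le_of_dvd h0 h
    omega
  have h1 : (1 : ZMod (3 * k)) ≠ 0 := by simpa using key 1 (by norm_num) (by norm_num)
  have h2 : (2 : ZMod (3 * k)) ≠ 0 := by simpa using key 2 (by norm_num) (by norm_num)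
  rw [Set.ncard_eq_three]
  refine ⟨0, e k, f k, ?_, ?_, ?_, rfl⟩
  · intro h; exact h1 (congrArg Prod.fst h).symm
  · intro h; exact h2 (congrArg Prod.fst h).symm
  · intro h
    have h : (1 : ZMod (3 * k)) = 2 := congrArg Prod.fst h
    apply h1
    linear_combination -h

/-- The vertices: upward triangles on the left, downward triangles on the right. -/
abbrev V (k : ℕ) : Type := A k ⊕ A k

/-- The honeycomb graph `{6,3}_{k,k}` on the torus. -/
def graph (k : ℕ) : SimpleGraph (V k) where
  Adj
    | .inl a, .inr b => b - a ∈ S k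
    | .inr b, .inl a => b - a ∈ S k
    | _, _ => False
  symm := ⟨by rintro (a | a) (b | b) h <;> exact h⟩
  loopless := ⟨by rintro (a | a) h <;> exact h⟩

lemma adj_lr {a b : A k} : (graph k).Adj (.inl a) (.inr b) ↔ b - a ∈ S k := Iff.rfl
lemma adj_rl {a b : A k} : (graph k).Adj (.inr b) (.inl a) ↔ b - a ∈ S k := Iff.rfl
lemma adj_ll {a b : A k} : (graph k).Adj (.inl a) (.inl b) ↔ False := Iff.rfl
lemma adj_rr {a b : A k} : (graph k).Adj (.inr a) (.inr b) ↔ False := Iff.rfl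

lemma card_neighborSet (hk : 0 < k) (v : V k) : Nat.card ((graph k).neighborSet v) = 3 := by
  rw [Nat.card_coe_set_eq, ← ncard_S hk]
  rcases v with a | b
  · have : (graph k).neighborSet (.inl a) = (fun s => .inr (s + a)) '' S k := by
      ext (x | x)
      · simp [adj_ll]
      · simp [adj_lr, ← eq_sub_iff_add_eq]
    rw [this]
    exact Set.ncard_image_of_injective _ fun s t h => by simpa using h
  · have : (graph k).neighborSet (.inr b) = (fun s => .inl (b - s)) '' S k := by
      ext (x | x)
      · simp only [SimpleGraph.mem_neighborSet, adj_rl, Set.mem_image, Sum.inl.injEq]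
        refine ⟨fun h => ⟨_, h, by abel⟩, ?_⟩
        rintro ⟨s, hs, rfl⟩
        simpa using hs
      · simp [adj_rr]
    rw [this]
    exact Set.ncard_image_of_injective _ fun s t h => by simpa using h

/-! ### Connectedness -/

/-- The differences `d` such that `a` and `a + d` are always connected by a path. -/
def reach (k : ℕ) : AddSubgroup (A k) where
  carrier := {d | ∀ a, (graph k).Reachable (.inl a) (.inl (a + d))}
  zero_mem' a := by simp
  add_mem' {c d} hc hd a := by
    rw [← add_assoc]
    exact (hc a).trans (hd _)
  neg_mem' {d} hd a := by simpa using (hd (a + -d)).symm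

lemma mem_reach {s : A k} (hs : s ∈ S k) : s ∈ reach k := fun a =>
  (adj_lr.2 (by simpa using hs) : (graph k).Adj (.inl a) (.inr (a + s))).reachable.trans
    (adj_rl.2 (by simp [mem_S]) : (graph k).Adj (.inr (a + s)) (.inl (a + s))).reachable

lemma mem_reach_all (d : A k) : d ∈ reach k := by
  have he : e k ∈ reach k := mem_reach (by simp [mem_S])
  have hf : f k ∈ reach k := mem_reach (by simp [mem_S])
  obtain ⟨m, n⟩ := d
  obtain ⟨m, rfl⟩ := ZMod.intCast_surjective m
  obtain ⟨n, rfl⟩ := ZMod.intCast_surjective n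
  have : ((m : ZMod (3 * k)), (n : ZMod k)) = (m + 2 * n) • e k - n • f k := by
    ext <;> simp [e, f]; ring
  rw [this]
  exact sub_mem (zsmul_mem he _) (zsmul_mem hf _)

lemma graph_connected : (graph k).Connected := by
  have key : ∀ v, (graph k).Reachable (.inl 0) v := by
    rintro (a | a)
    · simpa using mem_reach_all a 0
    · exact (by simpa using mem_reach_all a 0 : (graph k).Reachable (.inl 0) (.inl a)).trans
        (adj_lr.2 (by simp [mem_S]) : (graph k).Adj (.inl a) (.inr a)).reachable
  exact ⟨fun u v => (key u).symm.trans (key v)⟩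

/-! ### Automorphisms and arc-transitivity -/

/-- The automorphism group of the honeycomb graph. -/
def aut (k : ℕ) : Subgroup (Equiv.Perm (V k)) where
  carrier := {g | IsGraphAut (graph k) g}
  one_mem' _ _ := Iff.rfl
  mul_mem' {g h} hg hh a b := (hg _ _).trans (hh a b)
  inv_mem' {g} hg a b := by simpa using (hg (g⁻¹ a) (g⁻¹ b)).symm

/-- Translation by `c`. -/
def shift (c : A k) : Equiv.Perm (V k) :=
  Equiv.sumCongr (Equiv.addRight c) (Equiv.addRight c)

/-- The rotation of order 3 about the upward triangle `0`. The summand `e k` makes it permute the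
neighbours of that triangle, the downward triangles `0 ↦ e k ↦ f k ↦ 0`. -/
def turn (k : ℕ) : Equiv.Perm (V k) :=
  Equiv.sumCongr (rot k).toEquiv ((rot k).toEquiv.trans (Equiv.addRight (e k)))

/-- A glide reflection exchanging upward and downward triangles, whose square is the translation
by `e k`. -/
def glide (k : ℕ) : Equiv.Perm (V k) where
  toFun := Sum.elim (fun a => .inr (conj k a + e k)) (fun b => .inl (conj k b))
  invFun := Sum.elim (fun a => .inr (conj k a)) (fun b => .inl (conj k (b - e k)))
  left_inv := by rintro (a | a) <;> simp
  right_inv := by rintro (a | a) <;> simp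

@[simp] lemma shift_inl (c a : A k) : shift c (.inl a) = .inl (a + c) := rfl
@[simp] lemma shift_inr (c a : A k) : shift c (.inr a) = .inr (a + c) := rfl
@[simp] lemma turn_inl (a : A k) : turn k (.inl a) = .inl (rot k a) := rfl
@[simp] lemma turn_inr (a : A k) : turn k (.inr a) = .inr (rot k a + e k) := rfl
@[simp] lemma glide_inl (a : A k) : glide k (.inl a) = .inr (conj k a + e k) := rfl
@[simp] lemma glide_inr (a : A k) : glide k (.inr a) = .inl (conj k a) := rfl

lemma shift_mem (c : A k) : shift c ∈ aut k := by
  rintro (a | a) (b | b) <;> simp [adj_ll, adj_lr, adj_rl, adj_rr]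

lemma turn_mem : turn k ∈ aut k := by
  have h : ∀ a b : A k, rot k b + e k - rot k a ∈ S k ↔ b - a ∈ S k := fun a b => by
    rw [← rot_mem_S (a := b - a), map_sub, sub_add_eq_add_sub]
  rintro (a | a) (b | b) <;> simp [adj_ll, adj_lr, adj_rl, adj_rr, h]

lemma glide_mem : glide k ∈ aut k := by
  have h : ∀ a b : A k, conj k a + e k - conj k b ∈ S k ↔ b - a ∈ S k := fun a b => by
    rw [← sub_conj_mem_S (a := b - a), map_sub]
    apply iff_of_eq; congr 1; abel
  rintro (a | a) (b | b) <;> simp [adj_ll, adj_lr, adj_rl, adj_rr, h]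

/-- Arcs from an upward to a downward triangle are equivalent: translate the source to `0`, then
rotate. -/
lemma exists_aut_to_base_lr {a b : A k} (h : b - a ∈ S k) :
    ∃ g ∈ aut k, g (.inl a) = .inl 0 ∧ g (.inr b) = .inr 0 := by
  have hs := shift_mem (-a)
  rw [mem_S] at h
  simp only [sub_eq_add_neg] at h
  rcases h with h | h | h
  · exact ⟨shift (-a), hs, by simp, by simp [h]⟩
  · refine ⟨turn k * (turn k * shift (-a)), mul_mem turn_mem (mul_mem turn_mem hs), by simp, ?_⟩
    simp [h, rot_e, rot_f]
  · exact ⟨turn k * shift (-a), mul_mem turn_mem hs, by simp, by simp [h, rot_f]⟩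

lemma exists_aut_to_base {u v : V k} (h : (graph k).Adj u v) :
    ∃ g ∈ aut k, g u = .inl 0 ∧ g v = .inr 0 := by
  rcases u with a | a <;> rcases v with b | b
  · exact h.elim
  · exact exists_aut_to_base_lr h
  · -- the glide reflection turns the arc into one that starts at an upward triangle
    have h' := (glide_mem (k := k) _ _).2 h
    rw [glide_inl, glide_inr] at h'
    obtain ⟨g, hg, h1, h2⟩ := exists_aut_to_base_lr h'
    exact ⟨g * glide k, mul_mem hg glide_mem, by simpa using h1, by simpa using h2⟩
  · exact h.elim

/-! ### The cyclic group generated by the glide reflection -/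

lemma glide_sq : glide k ^ 2 = shift (e k) := by
  ext1 v
  rcases v with a | a <;> simp [pow_two, conj_e]

lemma shift_zpow (c : A k) (j : ℤ) : shift c ^ j = shift (j • c) := by
  have : ∀ c d : A k, shift (c + d) = shift c * shift d := by
    intro c d
    ext1 v
    rcases v with a | a <;> simp <;> abel
  let φ : Multiplicative (A k) →* Equiv.Perm (V k) := MonoidHom.mk' (fun c => shift c.toAdd) this
  exact (map_zpow φ (Multiplicative.ofAdd c) j).symm

lemma glide_zpow_even (j : ℤ) : glide k ^ (2 * j) = shift (j • e k) := by
  rw [zpow_mul, ← shift_zpow, ← glide_sq]; rfl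

lemma isSemiregular_glide : IsSemiregular (Subgroup.zpowers (glide k)) (V k) := by
  rintro ⟨_, i, rfl⟩ ⟨v, hv⟩
  change (glide k ^ i) v = v at hv
  rw [Subtype.ext_iff]
  change glide k ^ i = 1
  obtain ⟨j, rfl | rfl⟩ := Int.even_or_odd' i
  · rw [glide_zpow_even] at hv ⊢
    have h0 : j • e k = 0 := by rcases v with a | a <;> simpa using hv
    ext1 v
    rcases v with a | a <;> simp [h0]
  · rw [zpow_add_one, glide_zpow_even, Equiv.Perm.mul_apply] at hv
    rcases v with a | a <;> simp at hv

/-- The invariant that classifies the orbits of the glide reflection: the coordinate of `1 - ω`, up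
to the sign change that conjugation causes. -/
def level : V k → ZMod k := Sum.elim (fun a => a.2) (fun b => -b.2)

lemma level_glide (v : V k) : level (glide k v) = level v := by
  rcases v with a | a <;> simp [level, conj, e]

lemma level_zpow (i : ℤ) (v : V k) : level ((glide k ^ i) v) = level v := by
  induction i generalizing v with
  | zero => simp
  | succ i ih => rw [zpow_add_one, Equiv.Perm.mul_apply, ih, level_glide]
  | pred i ih =>
    rw [zpow_sub_one, Equiv.Perm.mul_apply, ih, ← level_glide, ← Equiv.Perm.mul_apply,
      mul_inv_cancel, Equiv.Perm.one_apply]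

lemma exists_zpow_eq_base (v : V k) : ∃ i : ℤ, (glide k ^ i) v = .inl (0, level v) := by
  have key : ∀ a : A k, ∃ i : ℤ, (glide k ^ i) (.inl a) = .inl (0, a.2) := by
    rintro ⟨m, n⟩
    obtain ⟨m, rfl⟩ := ZMod.intCast_surjective m
    exact ⟨2 * -m, by rw [glide_zpow_even]; simp [e]⟩
  rcases v with a | a
  · exact key a
  · obtain ⟨i, hi⟩ := key (conj k a)
    refine ⟨i + 1, ?_⟩
    rw [zpow_add_one, Equiv.Perm.mul_apply, glide_inr, hi]
    rfl

lemma level_eq_iff (u v : V k) :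
    level u = level v ↔ ∃ i : ℤ, (glide k ^ i) v = u := by
  constructor
  · intro h
    obtain ⟨i, hi⟩ := exists_zpow_eq_base u
    obtain ⟨j, hj⟩ := exists_zpow_eq_base v
    refine ⟨-i + j, ?_⟩
    rw [zpow_add, Equiv.Perm.mul_apply, hj, ← h, ← hi, ← Equiv.Perm.mul_apply, ← zpow_add]
    simp
  · rintro ⟨i, rfl⟩
    exact level_zpow i v

lemma card_orbits :
    Nat.card (MulAction.orbitRel.Quotient (Subgroup.zpowers (glide k)) (V k)) = k := by
  have hrel : ∀ u v : V k, MulAction.orbitRel (Subgroup.zpowers (glide k)) (V k) u v ↔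
      level u = level v := by
    intro u v
    rw [level_eq_iff, MulAction.orbitRel_apply]
    constructor
    · rintro ⟨⟨_, i, rfl⟩, h⟩
      exact ⟨i, h⟩
    · rintro ⟨i, h⟩
      exact ⟨⟨_, i, rfl⟩, h⟩
  refine (Nat.card_eq_of_bijective
    (Quotient.lift level fun u v h => (hrel u v).1 h) ⟨?_, ?_⟩).trans (Nat.card_zmod k)
  · rintro ⟨u⟩ ⟨v⟩ h
    exact Quotient.sound ((hrel u v).2 h)
  · intro n
    exact ⟨Quotient.mk _ (.inl (0, n)), rfl⟩

end HoneycombTorus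

/-- If `k` is an odd positive integer, then there exists a cubic
arc-transitive `k`-circulant of order `6 * k ^ 2`. -/
theorem exists_cubic_arc_transitive_k_circulant_of_odd
    (k : ℕ) (hk : 0 < k) (hko : Odd k) :
    ∃ (V : Type) (_ : Fintype V) (Γ : SimpleGraph V),
      Nat.card V = 6 * k ^ 2 ∧
      Γ.Connected ∧
      (∀ v : V, Nat.card (Γ.neighborSet v) = 3) ∧
      (∀ u v x y : V, Γ.Adj u v → Γ.Adj x y →
        ∃ g : Equiv.Perm V, IsGraphAut Γ g ∧ g u = x ∧ g v = y) ∧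
      ∃ C : Subgroup (Equiv.Perm V),
        (∀ g ∈ C, IsGraphAut Γ g) ∧ IsCyclic ↥C ∧ IsSemiregular ↥C V ∧
        Nat.card (MulAction.orbitRel.Quotient ↥C V) = k := by
  open HoneycombTorus in
  have : NeZero k := ⟨hk.ne'⟩
  have : NeZero (3 * k) := ⟨by omega⟩
  refine ⟨HoneycombTorus.V k, inferInstance, graph k, ?_, graph_connected, card_neighborSet hk, ?_,
    Subgroup.zpowers (glide k), ?_, inferInstance, isSemiregular_glide, card_orbits⟩
  · simp; ring
  · intro u v x y huv hxy
    obtain ⟨g, hg, gu, gv⟩ := exists_aut_to_base huv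
    obtain ⟨h, hh, hx, hy⟩ := exists_aut_to_base hxy
    refine ⟨h⁻¹ * g, mul_mem (inv_mem hh) hg, ?_, ?_⟩
    · rw [Equiv.Perm.mul_apply, gu, ← hx, ← Equiv.Perm.mul_apply, inv_mul_cancel,
        Equiv.Perm.one_apply]
    · rw [Equiv.Perm.mul_apply, gv, ← hy, ← Equiv.Perm.mul_apply, inv_mul_cancel,
        Equiv.Perm.one_apply]
  · exact fun g hg => (Subgroup.zpowers_le.2 glide_mem : _ ≤ aut k) hg
end

section
/- Let $p$ be an odd prime and let $P$ be a finite $p$-group that has a maximal subgroup which is cyclic. If $P$ is generated by its elements of order $p$, then $P$ is elementary abelian (i.e., $P$ is abelian and every nonidentity element has order $p$). -/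
/-!
The maximal subgroup `M` is normal, since `P` is nilpotent, and conjugation by any `b : P` acts on
the cyclic group `M` as a power map `a ↦ a ^ r`. If `b ^ p = 1`, then `r ≡ 1` modulo `p` as soon as
`M` is nontrivial, so `b` centralizes the elements of `M` killed by `p`
(`commute_of_pow_eq_one`). Moreover `(a * b) ^ p = a ^ (1 + r + ⋯ + r ^ (p - 1))`, and for odd `p`
the exponent is `p` modulo `p ^ 2`; hence `(a * b) ^ p = 1` forces `a ^ p = 1`
(`pow_eq_one_of_mul_pow_eq_one`).

Since `P` is generated by elements of order `p`, one of them, `y`, lies outside `M`, and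
`P = M ⟨y⟩`. Every element of order `p` is thus `a * y ^ i` with `a ∈ M` and `a ^ p = 1`. Any two such
products commute, so `P` is abelian and generated by elements of order `p`.
-/

/-- If `b ^ p = 1` and conjugation by `b` raises `a ≠ 1` to the power `r`, then `r ≡ 1 [ZMOD p]`:
iterating `p` times gives `a ^ (r ^ p) = a`, so `r ^ p ≡ 1`, and `r ^ p ≡ r` by Fermat. -/
lemma dvd_conj_exponent_sub_one {p : ℕ} (hp : p.Prime) {P : Type*} [Group P]
    (hP : IsPGroup p P) {a b : P} (ha : a ≠ 1) (hb : b ^ p = 1) {r : ℤ}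
    (hr : b * a * b⁻¹ = a ^ r) : (p : ℤ) ∣ r - 1 := by
  have : Fact p.Prime := ⟨hp⟩
  have iter : ∀ k : ℕ, b ^ k * a * (b ^ k)⁻¹ = a ^ (r ^ k) := by
    intro k
    induction k with
    | zero => simp
    | succ k ih =>
      calc b ^ (k + 1) * a * (b ^ (k + 1))⁻¹
          = b * (b ^ k * a * (b ^ k)⁻¹) * b⁻¹ := by rw [pow_succ']; group
        _ = (b * a * b⁻¹) ^ (r ^ k) := by rw [ih, conj_zpow]
        _ = a ^ (r ^ (k + 1)) := by rw [hr, ← zpow_mul, pow_succ']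
  have h1 : a ^ (r ^ p - 1) = 1 := by
    have := iter p
    rw [hb] at this
    rw [zpow_sub_one, ← this]
    simp
  have h2 : (p : ℤ) ∣ r ^ p - 1 :=
    (Int.natCast_dvd_natCast.2 (hP.dvd_orderOf ha)).trans (orderOf_dvd_iff_zpow_eq_one.2 h1)
  rw [← ZMod.intCast_zmod_eq_zero_iff_dvd] at h2 ⊢
  push_cast at h2 ⊢
  rwa [ZMod.pow_card] at h2

/-- An element `b` killed by `p` centralizes every `a` killed by `p` whose generated subgroup it
normalizes: the conjugation exponent `r` is `1` modulo `p`. -/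
lemma commute_of_pow_eq_one {p : ℕ} (hp : p.Prime) {P : Type*} [Group P]
    (hP : IsPGroup p P) {a b : P} (ha : a ^ p = 1) (hb : b ^ p = 1) {r : ℤ}
    (hr : b * a * b⁻¹ = a ^ r) : Commute b a := by
  by_cases h : a = 1
  · simp [h]
  obtain ⟨t, ht⟩ := dvd_conj_exponent_sub_one hp hP h hb hr
  have : a ^ r = a := by
    rw [show r = p * t + 1 by linarith, zpow_add, zpow_mul, zpow_natCast, ha]
    simp
  rw [this] at hr
  exact mul_inv_eq_iff_eq_mul.1 hr

/-- Here `(a * b) ^ p = a ^ (1 + r + ⋯ + r ^ (p - 1))`, with exponent congruent to `p` modulo `p ^ 2`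
when `a ≠ 1`. This congruence is where `p` being odd is needed. -/
lemma pow_eq_one_of_mul_pow_eq_one {p : ℕ} (hp : p.Prime) (hodd : Odd p) {P : Type*} [Group P]
    (hP : IsPGroup p P) {a b : P} (hb : b ^ p = 1) (hab : (a * b) ^ p = 1) {r : ℤ}
    (hr : b * a * b⁻¹ = a ^ r) : a ^ p = 1 := by
  have : Fact p.Prime := ⟨hp⟩
  by_cases h : a = 1
  · simp [h]
  obtain ⟨t, ht⟩ := dvd_conj_exponent_sub_one hp hP h hb hr
  have iter : ∀ k : ℕ, (a * b) ^ k = a ^ (∑ i ∈ Finset.range k, r ^ i) * b ^ k := by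
    intro k
    induction k with
    | zero => simp
    | succ k ih =>
      have hs : ∑ i ∈ Finset.range (k + 1), r ^ i = 1 + r * ∑ i ∈ Finset.range k, r ^ i := by
        rw [Finset.sum_range_succ', Finset.mul_sum]
        simp [pow_succ', add_comm]
      rw [pow_succ', ih, hs, zpow_add, zpow_one, zpow_mul, ← hr, conj_zpow, pow_succ']
      group
  have hS := iter p
  rw [hab, hb, mul_one] at hS
  have hmod : (p : ℤ) ^ 2 ∣ (∑ i ∈ Finset.range p, r ^ i) - p := by
    have := odd_sq_dvd_geom_sum₂_sub (R := ℤ) (a := 1) (b := t) hodd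
    simpa [show 1 + (p : ℤ) * t = r by linarith] using this
  have hdvd := orderOf_dvd_iff_zpow_eq_one.2 hS.symm
  obtain ⟨k, hk⟩ := IsPGroup.iff_orderOf.1 hP a
  rw [← orderOf_dvd_iff_pow_eq_one, hk]
  by_contra hnd
  have hk2 : 2 ≤ k := by
    by_contra hlt
    exact hnd (by simpa using pow_dvd_pow p (show k ≤ 1 by omega))
  rw [hk] at hdvd
  -- the exponent is `p` modulo `p ^ 2`, so `p ^ 2` cannot divide it
  have h2 : (p : ℤ) ^ 2 ∣ ∑ i ∈ Finset.range p, r ^ i :=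
    (pow_dvd_pow _ hk2).trans (by exact_mod_cast hdvd)
  have h3 : (p : ℤ) ^ 2 ∣ p := (dvd_sub_right h2).1 hmod
  have h4 : p ^ 2 ∣ p := by exact_mod_cast h3
  have := Nat.le_of_dvd hp.pos h4
  nlinarith [hp.two_le]

/-- Let `p` be an odd prime and `P` a finite `p`-group with a cyclic maximal
subgroup. If `P` is generated by its elements of order `p`, then `P` is
elementary abelian. -/
theorem elementaryAbelian_of_generated_by_order_p
    (p : ℕ) (hp : p.Prime) (hodd : Odd p)
    (P : Type*) [Group P] [Finite P] (hP : IsPGroup p P)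
    (M : Subgroup P) (hM : IsCoatom M) (hMcyc : IsCyclic ↥M)
    (hgen : Subgroup.closure {x : P | orderOf x = p} = ⊤) :
    (∀ a b : P, a * b = b * a) ∧ (∀ x : P, x ≠ 1 → orderOf x = p) := by
  have : Fact p.Prime := ⟨hp⟩
  have := hP.isNilpotent
  have : M.Normal := Subgroup.NormalizerCondition.normal_of_coatom M Group.normalizerCondition_of_isNilpotent hM
  have hconj : ∀ b : P, ∃ r : ℤ, ∀ a ∈ M, b * a * b⁻¹ = a ^ r := by
    intro b
    obtain ⟨r, hr⟩ := MonoidHom.map_cyclic (MulAut.conjNormal (H := M) b).toMonoidHom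
    refine ⟨r, fun a ha => ?_⟩
    simpa using congrArg Subtype.val (hr ⟨a, ha⟩)
  have hMcomm : ∀ a ∈ M, ∀ b ∈ M, Commute a b := by
    intro a ha b hb
    let := IsCyclic.commGroup (α := M)
    exact congrArg Subtype.val (mul_comm (⟨a, ha⟩ : M) ⟨b, hb⟩)
  obtain ⟨y, hy, hyM⟩ : ∃ y : P, orderOf y = p ∧ y ∉ M := by
    by_contra! h
    exact hM.1 (top_le_iff.1 (hgen ▸ (Subgroup.closure_le M).2 h))
  have hyp : y ^ p = 1 := hy ▸ pow_orderOf_eq_one y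
  have hsup : M ⊔ Subgroup.zpowers y = ⊤ :=
    hM.2 _ (left_lt_sup.2 fun h => hyM (h (Subgroup.mem_zpowers y)))
  have hdecomp : ∀ g : P, orderOf g = p → ∃ a ∈ M, a ^ p = 1 ∧ ∃ i : ℤ, g = a * y ^ i := by
    intro g hg
    have hgt : g ∈ M ⊔ Subgroup.zpowers y := hsup ▸ Subgroup.mem_top g
    obtain ⟨a, ha, b, ⟨i, rfl⟩, rfl⟩ := Subgroup.mem_sup_of_normal_left.1 hgt
    obtain ⟨r, hr⟩ := hconj (y ^ i)
    refine ⟨a, ha, ?_, i, rfl⟩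
    refine pow_eq_one_of_mul_pow_eq_one hp hodd hP (b := y ^ i) ?_ (hg ▸ pow_orderOf_eq_one _)
      (hr a ha)
    rw [← zpow_natCast, zpow_comm, zpow_natCast, hyp, one_zpow]
  obtain ⟨r, hr⟩ := hconj y
  have hcomm : ∀ g h : P, orderOf g = p → orderOf h = p → Commute g h := by
    intro g h hg hh
    obtain ⟨a, ha, hap, i, rfl⟩ := hdecomp g hg
    obtain ⟨b, hb, hbp, j, rfl⟩ := hdecomp h hh
    have hya : Commute y a := commute_of_pow_eq_one hp hP hap hyp (hr a ha)
    have hyb : Commute y b := commute_of_pow_eq_one hp hP hbp hyp (hr b hb)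
    exact ((hMcomm a ha b hb).mul_right (hya.symm.zpow_right j)).mul_left
      ((hyb.zpow_left i).mul_right ((Commute.refl y).zpow_zpow i j))
  have hall : ∀ a b : P, Commute a b := by
    intro a b
    have ha : a ∈ Subgroup.closure {x : P | orderOf x = p} := hgen ▸ Subgroup.mem_top a
    have hb : b ∈ Subgroup.closure {x : P | orderOf x = p} := hgen ▸ Subgroup.mem_top b
    induction ha, hb using Subgroup.closure_induction₂ with
    | mem x y hx hy => exact hcomm x y hx hy
    | one_left x => exact Commute.one_left x
    | one_right x => exact Commute.one_right x
    | mul_left x y z _ _ _ h1 h2 => exact h1.mul_left h2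
    | mul_right x y z _ _ _ h1 h2 => exact h1.mul_right h2
    | inv_left x y _ _ h => exact h.inv_left
    | inv_right x y _ _ h => exact h.inv_right
  refine ⟨fun a b => hall a b, fun x hx => orderOf_eq_prime ?_ hx⟩
  have hxc : x ∈ Subgroup.closure {x : P | orderOf x = p} := hgen ▸ Subgroup.mem_top x
  clear hx
  induction hxc using Subgroup.closure_induction with
  | mem x hx => exact hx ▸ pow_orderOf_eq_one x
  | one => simp
  | mul x y _ _ h1 h2 => rw [(hall x y).mul_pow, h1, h2, one_mul]
  | inv x _ h => rw [inv_pow, h, inv_one]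
end

section
/- Let $\Gamma$ be a finite simple graph in which every vertex has odd degree, and let $C$ be a cyclic group of automorphisms of $\Gamma$ that is semiregular on the vertices. If the number of orbits of $C$ on the vertices is odd, then $C$ has even order and the unique involution of $C$ reverses some edge of $\Gamma$ (i.e., there exist adjacent vertices $u, v$ such that the involution maps $u$ to $v$ and $v$ to $u$). -/
/-- The darts of `Γ` whose first vertex is the chosen representative of its `C`-orbit; such a dart
is stored as the orbit of its first vertex together with its second vertex. -/
abbrev RepDart {V : Type*} (Γ : SimpleGraph V) (C : Subgroup (Equiv.Perm V)) : Type _ :=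
  {p : MulAction.orbitRel.Quotient ↥C V × V // Γ.Adj p.1.out p.2}

theorem odd_card_repDart {V : Type*} [Finite V] (Γ : SimpleGraph V)
    (hodd : ∀ v : V, Odd (Nat.card (Γ.neighborSet v)))
    (C : Subgroup (Equiv.Perm V))
    (horb : Odd (Nat.card (MulAction.orbitRel.Quotient ↥C V))) :
    Odd (Nat.card (RepDart Γ C)) := by
  classical
  have : Finite (MulAction.orbitRel.Quotient ↥C V) := Quotient.finite _
  have := Fintype.ofFinite (MulAction.orbitRel.Quotient ↥C V)
  let e : RepDart Γ C ≃ (q : MulAction.orbitRel.Quotient ↥C V) × Γ.neighborSet q.out :=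
    Equiv.subtypeProdEquivSigmaSubtype
      (fun (q : MulAction.orbitRel.Quotient ↥C V) w => Γ.Adj q.out w)
  rw [Nat.card_congr e, Nat.card_sigma, Finset.odd_sum_iff_odd_card_odd]
  rw [Finset.filter_true_of_mem fun q _ => hodd q.out, Finset.card_univ, ← Nat.card_eq_fintype_card]
  exact horb

/-- Some edge is reversed by an element of `C`. -/
theorem exists_reversed_edge {V : Type*} [Finite V] (Γ : SimpleGraph V)
    (hodd : ∀ v : V, Odd (Nat.card (Γ.neighborSet v)))
    (C : Subgroup (Equiv.Perm V))
    (hCaut : ∀ g ∈ C, IsGraphAut Γ g)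
    (hCsemi : IsSemiregular ↥C V)
    (horb : Odd (Nat.card (MulAction.orbitRel.Quotient ↥C V))) :
    ∃ g : C, ∃ u v : V, Γ.Adj u v ∧ g • u = v ∧ g • v = u := by
  classical
  have : Finite (MulAction.orbitRel.Quotient ↥C V) := Quotient.finite _
  have := Fintype.ofFinite (RepDart Γ C)
  let cl : V → MulAction.orbitRel.Quotient ↥C V := fun v => Quotient.mk _ v
  have hcl_smul (g : C) (v : V) : cl (g • v) = cl v := Quotient.sound ⟨g, rfl⟩
  have hcl_out (q : MulAction.orbitRel.Quotient ↥C V) : cl q.out = q := Quotient.out_eq q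
  have hex (v : V) : ∃ g : C, g • (cl v).out = v :=
    (MulAction.orbitRel C V).symm (Quotient.mk_out (s := MulAction.orbitRel C V) v)
  choose t ht using hex
  -- By semiregularity, `t v` is the only element carrying the representative to `v`.
  have ht_uniq (g : C) (q : MulAction.orbitRel.Quotient ↥C V) : t (g • q.out) = g := by
    have h := ht (g • q.out)
    rw [hcl_smul, hcl_out] at h
    have := hCsemi (g⁻¹ * t (g • q.out)) ⟨q.out, by rw [mul_smul, h, inv_smul_smul]⟩
    exact (inv_mul_eq_one.mp this).symm
  have hadj (g : C) (a b : V) : Γ.Adj (g • a) (g • b) ↔ Γ.Adj a b := hCaut g g.2 a b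
  let f : RepDart Γ C → RepDart Γ C := fun p =>
    ⟨(cl p.1.2, (t p.1.2)⁻¹ • p.1.1.out), by
      rw [← hadj (t p.1.2), ht, smul_inv_smul]
      exact p.2.symm⟩
  have hf : Function.Involutive f := by
    rintro ⟨⟨q, w⟩, hp⟩
    apply Subtype.ext
    apply Prod.ext
    · change cl ((t w)⁻¹ • q.out) = q
      rw [hcl_smul, hcl_out]
    · change (t ((t w)⁻¹ • q.out))⁻¹ • (cl w).out = w
      rw [ht_uniq, inv_inv, ht]
  have hcard : ¬ 2 ∣ Fintype.card (RepDart Γ C) := by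
    rw [← Nat.card_eq_fintype_card]
    exact (odd_card_repDart Γ hodd C horb).not_two_dvd_nat
  have hσ : hf.toPerm f ^ 2 ^ 1 = 1 := by
    ext1 p
    rw [pow_one, sq]
    exact hf p
  obtain ⟨⟨⟨q, w⟩, hp⟩, hfix⟩ := Equiv.Perm.exists_fixed_point_of_prime hcard hσ
  have h1 : cl w = q := congrArg (fun p => p.1.1) hfix
  have h2 : (t w)⁻¹ • q.out = w := congrArg (fun p => p.1.2) hfix
  refine ⟨t w, q.out, w, hp, ?_, ?_⟩
  · rw [← h1]
    exact ht w
  · exact (inv_smul_eq_iff.mp h2).symm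

/-- Let `Γ` be a finite graph with every vertex having odd valency and let `C`
be a semiregular cyclic group of automorphisms of `Γ`. If `C` has an odd number
of orbits, then `C` has even order and the unique involution of `C` reverses
some edge of `Γ`. -/
theorem even_order_and_involution_reverses_edge
    (V : Type*) [Fintype V] (Γ : SimpleGraph V)
    (hodd : ∀ v : V, Odd (Nat.card (Γ.neighborSet v)))
    (C : Subgroup (Equiv.Perm V))
    (hCaut : ∀ g ∈ C, IsGraphAut Γ g)
    (hCcyc : IsCyclic ↥C)
    (hCsemi : IsSemiregular ↥C V)
    (horb : Odd (Nat.card (MulAction.orbitRel.Quotient ↥C V))) :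
    Even (Nat.card ↥C) ∧
    ∃ c ∈ C, orderOf c = 2 ∧ (∀ c' ∈ C, orderOf c' = 2 → c' = c) ∧
      ∃ u v : V, Γ.Adj u v ∧ c u = v ∧ c v = u := by
  obtain ⟨g, u, v, huv, hgu, hgv⟩ := exists_reversed_edge Γ hodd C hCaut hCsemi horb
  have hord : orderOf g = 2 := by
    refine orderOf_eq_prime (hCsemi _ ⟨u, by rw [sq, mul_smul, hgu, hgv]⟩) ?_
    rintro rfl
    exact huv.ne (by simpa using hgu)
  have hdvd : 2 ∣ Nat.card C := hord ▸ orderOf_dvd_natCard g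
  refine ⟨even_iff_two_dvd.mpr hdvd, g, g.2, by rwa [Subgroup.orderOf_coe], ?_,
    u, v, huv, hgu, hgv⟩
  intro c' hc' hc'ord
  classical
  have := Fintype.ofFinite C
  have hone : (Finset.univ.filter fun a : C => orderOf a = 2).card = 1 := by
    rw [IsCyclic.card_orderOf_eq_totient (by simpa using hdvd), Nat.totient_two]
  have heq := Finset.card_le_one.mp hone.le ⟨c', hc'⟩
    (by simpa using (Subgroup.orderOf_mk c' hc').trans hc'ord) g (by simpa using hord)
  exact congrArg Subtype.val heq
end

section
/- Let $\Gamma$ be a finite connected simple graph, let $G$ be a group of automorphisms of $\Gamma$ acting transitively on the ordered pairs of adjacent vertices (so $\Gamma$ is $G$-arc-transitive), and let $N$ be a normal subgroup of $G$. If some element of $N$ reverses some edge of $\Gamma$, then $N$ acts transitively on the vertices of $\Gamma$. -/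
/-- Let `Γ` be a `G`-arc-transitive connected graph and let `N` be a normal
subgroup of `G`. If `N` contains an element reversing some edge of `Γ`, then
`N` is transitive on the vertices of `Γ`. -/
theorem vertex_transitive_of_normal_reverses_edge
    (V : Type*) [Fintype V] (Γ : SimpleGraph V) (hconn : Γ.Connected)
    (G : Subgroup (Equiv.Perm V))
    (hGaut : ∀ g ∈ G, IsGraphAut Γ g)
    (hGarc : ∀ u v x y : V, Γ.Adj u v → Γ.Adj x y →
      ∃ g ∈ G, g u = x ∧ g v = y)
    (N : Subgroup ↥G) [N.Normal]
    (hrev : ∃ n ∈ N, ∃ u v : V, Γ.Adj u v ∧ (n : Equiv.Perm V) u = v ∧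
      (n : Equiv.Perm V) v = u) :
    ∀ u v : V, ∃ n ∈ N, (n : Equiv.Perm V) u = v := by
  obtain ⟨n, hn, u, v, huv, hu, -⟩ := hrev
  have step : ∀ x y : V, Γ.Adj x y → ∃ m ∈ N, (m : Equiv.Perm V) x = y := by
    intro x y hxy
    obtain ⟨g, hg, rfl, rfl⟩ := hGarc u v x y huv hxy
    refine ⟨⟨g, hg⟩ * n * ⟨g, hg⟩⁻¹, Subgroup.Normal.conj_mem ‹_› n hn _, ?_⟩
    simp [hu]
  intro x y
  obtain ⟨p⟩ := hconn.preconnected x y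
  induction p with
  | nil => exact ⟨1, N.one_mem, rfl⟩
  | cons h _ ih =>
    obtain ⟨a, ha, rfl⟩ := step _ _ h
    obtain ⟨b, hb, rfl⟩ := ih
    exact ⟨b * a, N.mul_mem hb ha, rfl⟩
end

section
/- Let $G$ be a finite transitive permutation group on a finite set $\Omega$, let $N$ be a normal subgroup of $G$, and let $C$ be a subgroup of $G$ that is semiregular on $\Omega$ with exactly $k$ orbits. If $|N|$ is coprime to the order $|G_v|$ of a point stabiliser, then the induced action of $C$ on the set of $N$-orbits on $\Omega$ is semiregular, and the number $k'$ of orbits of $C$ in this induced action divides $k$. -/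
open MulAction

/-- For a normal subgroup `N` of `G`, the group `G` acts naturally on the set
of `N`-orbits. -/
instance orbitQuotientAction {G Ω : Type*} [Group G] [MulAction G Ω]
    (N : Subgroup G) [N.Normal] :
    MulAction G (orbitRel.Quotient N Ω) where
  smul g := Quotient.map' (fun v => g • v) (by
    intro a b h
    obtain ⟨n, hn⟩ := h
    refine ⟨⟨g * n * g⁻¹, Subgroup.Normal.conj_mem ‹N.Normal› n n.2 g⟩, ?_⟩
    have hn' : (n : G) • b = a := hn
    show (g * (n : G) * g⁻¹) • (g • b) = g • a
    rw [← hn']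
    simp [mul_smul])
  one_smul q := Quotient.inductionOn' q (fun a => by
    show Quotient.map' _ _ (Quotient.mk'' a) = Quotient.mk'' a
    simp [Quotient.map'_mk''])
  mul_smul g h q := Quotient.inductionOn' q (fun a => by
    show Quotient.map' _ _ (Quotient.mk'' a) =
      Quotient.map' _ _ (Quotient.map' _ _ (Quotient.mk'' a))
    simp [Quotient.map'_mk'', mul_smul])

/-!
Coprimality forces `N ∩ G_v = 1`, so `N` is semiregular and every `N`-orbit has exactly `|N|` points.
Let `c ∈ C` fix an `N`-orbit `Δ = Nv`. On the one hand `⟨c⟩` is semiregular on `Δ`, so the order of `c`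
divides `|Δ| = |N|`. On the other hand `c ∈ n G_v` for some `n ∈ N`, so the image of `c` in `G ⧸ N` has
order dividing `|G_v|`. As these are coprime, `c ∈ N` (`mem_of_smul_mk_eq`), whence `c` fixes all
`N`-orbits.

So every stabiliser in `C` of an `N`-orbit is `C ∩ N`, and counting gives
`k |C| = |Ω| = |N| · k' · |C : C ∩ N|`, that is, `k = k' · |N : C ∩ N|`.
-/

theorem smul_orbitQuotient_mk {G Ω : Type*} [Group G] [MulAction G Ω]
    (N : Subgroup G) [N.Normal] (g : G) (v : Ω) :
    g • (Quotient.mk'' v : orbitRel.Quotient N Ω) = Quotient.mk'' (g • v) := rfl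

theorem IsSemiregular.stabilizer_eq_bot {G V : Type*} [Group G] [MulAction G V]
    (h : IsSemiregular G V) (v : V) : stabilizer G v = ⊥ :=
  (Subgroup.eq_bot_iff_forall _).2 fun g hg => h g ⟨v, hg⟩

theorem IsSemiregular.card_eq {G V : Type*} [Group G] [MulAction G V]
    (h : IsSemiregular G V) :
    Nat.card V = Nat.card (orbitRel.Quotient G V) * Nat.card G := by
  rw [Nat.card_congr (selfEquivOrbitsQuotientProd h.stabilizer_eq_bot), Nat.card_prod]

theorem isSemiregular_of_coprime {G Ω : Type*} [Group G] [MulAction G Ω] (N : Subgroup G)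
    (hcop : ∀ ω : Ω, Nat.Coprime (Nat.card N) (Nat.card (stabilizer G ω))) :
    IsSemiregular N Ω := by
  rintro n ⟨v, hv⟩
  have hmem : (n : G) ∈ N ⊓ stabilizer G v := ⟨n.2, hv⟩
  rw [(Subgroup.disjoint_of_coprime_natCard (hcop v)).eq_bot] at hmem
  exact Subtype.ext hmem

/-- The order of an element generating a semiregular group and preserving an `N`-orbit divides the
length `|N|` of that orbit. -/
theorem orderOf_dvd_card_of_smul_mk_eq {G Ω : Type*} [Group G] [MulAction G Ω]
    (N : Subgroup G) [N.Normal] (hN : IsSemiregular N Ω) (c : G)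
    (hc : IsSemiregular (Subgroup.zpowers c) Ω) (v : Ω)
    (hq : c • (Quotient.mk'' v : orbitRel.Quotient N Ω) = Quotient.mk'' v) :
    orderOf c ∣ Nat.card N := by
  have hle : Subgroup.zpowers c ≤ stabilizer G (Quotient.mk'' v : orbitRel.Quotient N Ω) := by
    rw [Subgroup.zpowers_le]
    exact hq
  let S : SubMulAction (Subgroup.zpowers c) Ω :=
    { carrier := orbit N v
      smul_mem' := fun d w hw => by
        have hw' : (Quotient.mk'' w : orbitRel.Quotient N Ω) = Quotient.mk'' v :=
          Quotient.sound' hw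
        have hd : (d : G) • (Quotient.mk'' v : orbitRel.Quotient N Ω) = Quotient.mk'' v :=
          hle d.2
        rw [← hw', smul_orbitQuotient_mk, hw'] at hd
        exact Quotient.exact' hd }
  have hS : IsSemiregular (Subgroup.zpowers c) S := by
    rintro d ⟨w, hw⟩
    exact hc d ⟨w, congrArg Subtype.val hw⟩
  have hcard : Nat.card S = Nat.card N := by
    have h := index_stabilizer N v
    rw [hN.stabilizer_eq_bot, Subgroup.index_bot] at h
    exact h.symm
  rw [← hcard, hS.card_eq, Nat.card_zpowers]
  exact Dvd.intro_left _ rfl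

/-- If `c` generates a semiregular group and preserves an `N`-orbit, then `c ∈ N`: the order of its
image in `G ⧸ N` divides both `|N|` and `|G_v|`. -/
theorem mem_of_smul_mk_eq {G Ω : Type*} [Group G] [MulAction G Ω]
    (N : Subgroup G) [N.Normal] (c : G) (hc : IsSemiregular (Subgroup.zpowers c) Ω)
    (hcop : ∀ ω : Ω, Nat.Coprime (Nat.card N) (Nat.card (stabilizer G ω))) (v : Ω)
    (hq : c • (Quotient.mk'' v : orbitRel.Quotient N Ω) = Quotient.mk'' v) :
    c ∈ N := by
  have hord := orderOf_dvd_card_of_smul_mk_eq N (isSemiregular_of_coprime N hcop) c hc v hq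
  obtain ⟨n, hn⟩ : c • v ∈ orbit N v := Quotient.exact' hq
  have hn' : (n : G) • v = c • v := hn
  have hst : (n : G)⁻¹ * c ∈ stabilizer G v := by
    rw [mem_stabilizer_iff, mul_smul, ← hn', inv_smul_smul]
  have himg : QuotientGroup.mk' N ((n : G)⁻¹ * c) = QuotientGroup.mk' N c := by
    rw [map_mul, map_inv]
    simp
  have h1 : orderOf (QuotientGroup.mk' N c) ∣ Nat.card N := (orderOf_map_dvd _ c).trans hord
  have h2 : orderOf (QuotientGroup.mk' N c) ∣ Nat.card (stabilizer G v) := by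
    rw [← himg]
    exact (orderOf_map_dvd _ _).trans (Subgroup.orderOf_dvd_natCard _ hst)
  have h3 := orderOf_eq_one_iff.1 (Nat.eq_one_of_dvd_coprimes (hcop v) h1 h2)
  exact (QuotientGroup.eq_one_iff c).1 h3

theorem smul_orbitQuotient_eq_self {G Ω : Type*} [Group G] [MulAction G Ω]
    (N : Subgroup G) [N.Normal] {c : G} (hc : c ∈ N) (q : orbitRel.Quotient N Ω) :
    c • q = q := by
  induction q using Quotient.inductionOn' with
  | h v => exact Quotient.sound' ⟨⟨c, hc⟩, rfl⟩

/-- Let `G` be a finite transitive permutation group on `Ω`, let `N` be a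
normal subgroup of `G` and let `C` be a semiregular subgroup of `G` with `k`
orbits. If `|N|` is coprime to the order of a point stabiliser, then the
induced action of `C` on the set of `N`-orbits is semiregular with `k'`
orbits, where `k'` divides `k`. -/
theorem induced_action_semiregular_and_orbits_dvd
    (G Ω : Type*) [Group G] [Finite G] [Finite Ω]
    [MulAction G Ω] [FaithfulSMul G Ω]
    (htrans : MulAction.IsPretransitive G Ω)
    (N : Subgroup G) [N.Normal]
    (C : Subgroup G)
    (hCsemi : IsSemiregular ↥C Ω)
    (k : ℕ) (hCorb : Nat.card (orbitRel.Quotient ↥C Ω) = k)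
    (hcop : ∀ ω : Ω, Nat.Coprime (Nat.card ↥N) (Nat.card (MulAction.stabilizer G ω))) :
    (∀ c ∈ C, (∃ q : orbitRel.Quotient N Ω, c • q = q) →
      ∀ q : orbitRel.Quotient N Ω, c • q = q) ∧
    Nat.card (orbitRel.Quotient ↥C (orbitRel.Quotient N Ω)) ∣ k := by
  have hmem : ∀ c ∈ C, ∀ q : orbitRel.Quotient N Ω, c • q = q → c ∈ N := by
    intro c hc q hq
    induction q using Quotient.inductionOn' with
    | h v =>
      refine mem_of_smul_mk_eq N c ?_ hcop v hq
      rintro ⟨d, hd⟩ ⟨w, hw⟩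
      have hdC : d ∈ C := (Subgroup.zpowers_le.2 hc) hd
      have h1 := congrArg Subtype.val (hCsemi ⟨d, hdC⟩ ⟨w, hw⟩)
      exact Subtype.ext h1
  refine ⟨fun c hc ⟨q, hq⟩ => smul_orbitQuotient_eq_self N (hmem c hc q hq), ?_⟩
  have hstab : ∀ q : orbitRel.Quotient N Ω, stabilizer C q = N.subgroupOf C := by
    intro q
    ext c
    exact ⟨fun h => hmem c c.2 q h, fun h => smul_orbitQuotient_eq_self N h q⟩
  -- All stabilisers coincide, so every `C`-orbit of `N`-orbits has length `|C : C ∩ N|`.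
  have hQ : Nat.card (orbitRel.Quotient N Ω) =
      Nat.card (orbitRel.Quotient C (orbitRel.Quotient N Ω)) * N.relIndex C := by
    have e := selfEquivSigmaOrbitsQuotientStabilizer C (orbitRel.Quotient N Ω)
    simp only [hstab] at e
    rw [Nat.card_congr (e.trans (Equiv.sigmaEquivProd _ _)), Nat.card_prod]
    rfl
  have hΩC := hCsemi.card_eq
  have hΩN := (isSemiregular_of_coprime N hcop).card_eq
  have hCcard : Nat.card (N ⊓ C : Subgroup G) * N.relIndex C = Nat.card C := by
    rw [← Subgroup.inf_relIndex_right, ← Subgroup.relIndex_bot_left, ← Subgroup.relIndex_bot_left]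
    exact Subgroup.relIndex_mul_relIndex _ _ _ bot_le inf_le_right
  have hNcard : Nat.card (N ⊓ C : Subgroup G) * C.relIndex N = Nat.card N := by
    rw [← Subgroup.inf_relIndex_left, ← Subgroup.relIndex_bot_left, ← Subgroup.relIndex_bot_left]
    exact Subgroup.relIndex_mul_relIndex _ _ _ bot_le inf_le_left
  have hpos : 0 < Nat.card C := Nat.card_pos
  refine ⟨C.relIndex N, Nat.eq_of_mul_eq_mul_right hpos ?_⟩
  rw [← hCorb, ← hΩC, hΩN, hQ, ← hNcard, ← hCcard]
  ring
end

section
/- Let $\Gamma$ be a finite connected simple graph and let $G$ be a group of automorphisms of $\Gamma$ acting transitively on ordered pairs of adjacent vertices. If $G$ has a normal subgroup that is semiregular on the vertices with at most two orbits on the vertices, then the subgroup of $G$ fixing some vertex $v$ and all neighbours of $v$ is trivial. -/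
/-- If `g` fixes `v` and its neighbours, it fixes every `N`-translate of `v` sharing a neighbour
with `v`. -/
lemma fixes_translate {V : Type*} (Γ : SimpleGraph V) (G : Subgroup (Equiv.Perm V))
    (hGaut : ∀ g ∈ G, IsGraphAut Γ g) (N : Subgroup ↥G) [hN : N.Normal]
    (hNsemi : IsSemiregular ↥N V) (v w : V) (g : ↥G) (hv : g • v = v)
    (hg : ∀ x : V, Γ.Adj v x → g • x = x) (n : ↥G) (hn : n ∈ N)
    (hvw : Γ.Adj v w) (hwu : Γ.Adj w (n • v)) : g • (n • v) = n • v := by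
  have hadj : Γ.Adj v (n⁻¹ • w) := by
    have h := (hGaut (n : Equiv.Perm V) n.2 (n⁻¹ • w) v).1 (by
      change Γ.Adj (n • n⁻¹ • w) (n • v)
      rwa [smul_inv_smul])
    exact h.symm
  have hw : g • w = w := hg w hvw
  have hw' : g • n⁻¹ • w = n⁻¹ • w := hg _ hadj
  have hmem : n * (g * n⁻¹ * g⁻¹) ∈ N := N.mul_mem hn (hN.conj_mem _ (N.inv_mem hn) g)
  have hfix : (n * (g * n⁻¹ * g⁻¹)) • w = w := by
    rw [mul_smul, mul_smul, mul_smul, inv_smul_eq_iff.2 hw.symm, hw', smul_inv_smul]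
  have hone : n * (g * n⁻¹ * g⁻¹) = 1 := congrArg Subtype.val (hNsemi ⟨_, hmem⟩ ⟨w, hfix⟩)
  have hcomm : g * n = n * g := by
    have h : n * g * (g * n)⁻¹ = 1 := by
      simp only [mul_inv_rev, ← mul_assoc] at hone ⊢
      exact hone
    exact (mul_inv_eq_one.1 h).symm
  rw [← mul_smul, hcomm, mul_smul, hv]

/-- Elements of `G` permute the orbits of the normal subgroup `N`. -/
lemma orbit_transport {G V : Type*} [Group G] [MulAction G V] (N : Subgroup G) [hN : N.Normal]
    (h : G) {a b : V} (hab : ∃ n ∈ N, n • a = b) : ∃ n ∈ N, n • h • a = h • b := by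
  obtain ⟨n, hn, rfl⟩ := hab
  exact ⟨h * n * h⁻¹, hN.conj_mem n hn h, by simp [mul_smul]⟩

/-- Let `Γ` be a `G`-arc-transitive connected graph. If `G` has a normal
semiregular subgroup with at most two orbits on vertices, then the subgroup of
`G` fixing a vertex and all its neighbours is trivial. -/
theorem pointwise_vertex_and_nbrs_stabilizer_trivial
    (V : Type*) [Fintype V] (Γ : SimpleGraph V) (hconn : Γ.Connected)
    (G : Subgroup (Equiv.Perm V))
    (hGaut : ∀ g ∈ G, IsGraphAut Γ g)
    (hGarc : ∀ u v x y : V, Γ.Adj u v → Γ.Adj x y →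
      ∃ g ∈ G, g u = x ∧ g v = y)
    (N : Subgroup ↥G) [N.Normal]
    (hNsemi : IsSemiregular ↥N V)
    (hNorb : Nat.card (MulAction.orbitRel.Quotient ↥N V) ≤ 2) :
    ∀ v : V, ∀ g ∈ G, g v = v → (∀ w : V, Γ.Adj v w → g w = w) → g = 1 := by
  intro v₀ g hgG hv₀ hw₀
  have horb : ∀ a b : V, (Quotient.mk (MulAction.orbitRel ↥N V) a = Quotient.mk _ b) ↔
      ∃ n ∈ N, n • a = b := by
    intro a b
    rw [eq_comm, Quotient.eq]
    constructor
    · rintro ⟨n, hn⟩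
      exact ⟨n, n.2, hn⟩
    · rintro ⟨n, hn, h⟩
      exact ⟨⟨n, hn⟩, h⟩
  have htwo : ∀ v w u : V, Γ.Adj v w → Γ.Adj w u → ∃ n ∈ N, n • v = u := by
    intro v w u hvw hwu
    obtain ⟨h, hG, rfl, rfl⟩ := hGarc v w w u hvw hwu
    rw [← horb]
    by_contra hne
    by_cases hc : ∃ n ∈ N, n • v = h v
    · have hc' := orbit_transport N (⟨h, hG⟩ : ↥G) hc
      exact hne (((horb _ _).2 hc).trans ((horb _ _).2 hc'))
    · have hc' : ¬ ∃ n ∈ N, n • h v = h (h v) := fun hc' => hc (by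
        have := orbit_transport N (⟨h, hG⟩ : ↥G)⁻¹ hc'
        change ∃ n ∈ N, n • h⁻¹ (h v) = h⁻¹ (h (h v)) at this
        simpa using this)
      rw [← horb] at hc hc'
      classical
      have : Fintype (MulAction.orbitRel.Quotient ↥N V) := Fintype.ofFinite _
      rw [Nat.card_eq_fintype_card] at hNorb
      exact absurd (Fintype.two_lt_card_iff.2 ⟨_, _, _, hc, hne, hc'⟩) (not_lt.2 hNorb)
  have hstep : ∀ v w : V, Γ.Adj v w → (g v = v ∧ ∀ x, Γ.Adj v x → g x = x) →
      (g w = w ∧ ∀ x, Γ.Adj w x → g x = x) := by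
    rintro v w hvw ⟨hv, hx⟩
    refine ⟨hx w hvw, fun u hwu => ?_⟩
    obtain ⟨n, hn, rfl⟩ := htwo v w u hvw hwu
    exact fixes_translate Γ G hGaut N hNsemi v w ⟨g, hgG⟩ hv hx n hn hvw hwu
  have hall : ∀ a b : V, Γ.Walk a b → (g a = a ∧ ∀ x, Γ.Adj a x → g x = x) → g b = b := by
    intro a b p
    induction p with
    | nil => exact fun h => h.1
    | cons hadj _ ih => exact fun h => ih (hstep _ _ hadj h)
  ext x
  obtain ⟨p⟩ := hconn.preconnected v₀ x
  exact hall v₀ x p ⟨hv₀, hw₀⟩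
end

section
/- Let $\Gamma$ be a finite connected cubic graph, let $G$ be a group of automorphisms acting transitively on ordered pairs of adjacent vertices, and let $N$ be a normal subgroup of $G$ such that for every vertex $v$ the stabiliser $N_v$ acts transitively on the neighbourhood $\Gamma(v)$ (i.e., $N$ is locally-transitive on $\Gamma$). If $|N_v| \leq 12$ for every vertex $v$, then $|G_v| \leq 12$ for every vertex $v$. -/
namespace CubicStab

variable {V : Type*}

theorem apply_inv_self (g : Equiv.Perm V) (x : V) : g (g⁻¹ x) = x := g.apply_symm_apply x

/-! ### Local kernels and the triviality criterion -/

/-- The subgroup of `M` fixing `v` and all of its neighbours. For `M` consisting of automorphisms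
of `Γ`, it is the kernel of the action of the stabiliser `M_v` on the neighbourhood of `v`. -/
def localKernel (Γ : SimpleGraph V) (M : Subgroup (Equiv.Perm V)) (v : V) :
    Subgroup (Equiv.Perm V) where
  carrier := {g | g ∈ M ∧ g v = v ∧ ∀ w, Γ.Adj v w → g w = w}
  one_mem' := ⟨M.one_mem, rfl, fun _ _ => rfl⟩
  mul_mem' := by
    rintro a b ⟨ha, hav, haw⟩ ⟨hb, hbv, hbw⟩
    refine ⟨M.mul_mem ha hb, ?_, fun w hw => ?_⟩
    · rw [Equiv.Perm.mul_apply, hbv, hav]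
    · rw [Equiv.Perm.mul_apply, hbw w hw, haw w hw]
  inv_mem' := by
    rintro a ⟨ha, hav, haw⟩
    refine ⟨M.inv_mem ha, ?_, fun w hw => ?_⟩
    · rw [Equiv.Perm.inv_eq_iff_eq, hav]
    · rw [Equiv.Perm.inv_eq_iff_eq, haw w hw]

theorem mem_localKernel {Γ : SimpleGraph V} {M : Subgroup (Equiv.Perm V)} {v : V}
    {g : Equiv.Perm V} :
    g ∈ localKernel Γ M v ↔ g ∈ M ∧ g v = v ∧ ∀ w, Γ.Adj v w → g w = w := Iff.rfl

/-- If the elements of `G` conjugating `K` into itself move `w` to every neighbour of `v` while fixing `v`, and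
vice versa, then every vertex is the image of `v` or `w` under such an element, so a group `K` fixing
`v` and `w` fixes every vertex. -/
theorem fixes_all_of_normalized {Γ : SimpleGraph V} (hconn : Γ.Connected)
    {G K : Subgroup (Equiv.Perm V)} (hG : ∀ g ∈ G, IsGraphAut Γ g) {v w : V}
    (hKv : ∀ k ∈ K, k v = v) (hKw : ∀ k ∈ K, k w = w)
    (hv : ∀ b, Γ.Adj v b → ∃ h ∈ G, h v = v ∧ h w = b ∧ ∀ k ∈ K, h⁻¹ * k * h ∈ K)
    (hw : ∀ b, Γ.Adj w b → ∃ h ∈ G, h w = w ∧ h v = b ∧ ∀ k ∈ K, h⁻¹ * k * h ∈ K) :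
    K = ⊥ := by
  have key : ∀ x, ∃ h ∈ G, (∀ k ∈ K, h⁻¹ * k * h ∈ K) ∧ (h v = x ∨ h w = x) := by
    intro x
    have hr := (SimpleGraph.reachable_iff_reflTransGen v x).1 (hconn.preconnected v x)
    induction hr with
    | refl => exact ⟨1, G.one_mem, by simp, Or.inl rfl⟩
    | @tail x y _ hxy ih =>
      obtain ⟨h, hhG, hhK, hx⟩ := ih
      have adj : ∀ u, h u = x → Γ.Adj u (h⁻¹ y) := by
        intro u hu
        rw [← hG h hhG, hu, apply_inv_self]
        exact hxy
      have comp : ∀ h' : Equiv.Perm V, (∀ k ∈ K, h'⁻¹ * k * h' ∈ K) →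
          ∀ k ∈ K, (h * h')⁻¹ * k * (h * h') ∈ K := by
        intro h' hh' k hk
        have := hh' _ (hhK k hk)
        simpa [mul_assoc] using this
      rcases hx with hx | hx
      · obtain ⟨h', h1, h2, h3, h4⟩ := hv _ (adj _ hx)
        exact ⟨h * h', G.mul_mem hhG h1, comp h' h4, Or.inr (by simp [h3])⟩
      · obtain ⟨h', h1, h2, h3, h4⟩ := hw _ (adj _ hx)
        exact ⟨h * h', G.mul_mem hhG h1, comp h' h4, Or.inl (by simp [h3])⟩
  rw [Subgroup.eq_bot_iff_forall]
  intro k hk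
  ext x
  obtain ⟨h, -, hK, hx⟩ := key x
  have hk' := hK k hk
  have fin : ∀ u, (h⁻¹ * k * h) u = u → h u = x → k x = x := by
    intro u hu hux
    rw [Equiv.Perm.mul_apply, Equiv.Perm.mul_apply, Equiv.Perm.inv_eq_iff_eq, hux] at hu
    exact hu
  rcases hx with hx | hx
  · exact fin v (hKv _ hk') hx
  · exact fin w (hKw _ hk') hx

/-! ### Orbit counting and neighbourhoods -/

theorem card_eq_orbit_mul (A : Subgroup (Equiv.Perm V)) (x : V) :
    (MulAction.orbit A x).ncard *
      Nat.card (A ⊓ MulAction.stabilizer (Equiv.Perm V) x : Subgroup (Equiv.Perm V)) =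
      Nat.card A := by
  have h1 := Nat.card_congr (MulAction.orbitProdStabilizerEquivGroup A x)
  rw [Nat.card_prod] at h1
  rw [← h1, ← Nat.card_coe_set_eq]
  congr 1
  refine Nat.card_congr ⟨fun g => ⟨⟨g.1, g.2.1⟩, g.2.2⟩, fun g => ⟨g.1.1, g.1.2, g.2⟩,
    fun _ => rfl, fun _ => rfl⟩

theorem card_le_of_maps [Finite V] (A : Subgroup (Equiv.Perm V)) (x : V) (S : Set V)
    (h : ∀ g ∈ A, g x ∈ S) :
    Nat.card A ≤ S.ncard *
      Nat.card (A ⊓ MulAction.stabilizer (Equiv.Perm V) x : Subgroup (Equiv.Perm V)) := by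
  rw [← card_eq_orbit_mul A x]
  refine Nat.mul_le_mul_right _ (Set.ncard_le_ncard ?_ (Set.toFinite _))
  rintro _ ⟨g, rfl⟩
  exact h g.1 g.2

theorem mul_card_le_of_transitive [Finite V] (A : Subgroup (Equiv.Perm V)) (x : V) (S : Set V)
    (h : ∀ y ∈ S, ∃ g ∈ A, g x = y) :
    S.ncard * Nat.card (A ⊓ MulAction.stabilizer (Equiv.Perm V) x : Subgroup (Equiv.Perm V)) ≤
      Nat.card A := by
  rw [← card_eq_orbit_mul A x]
  refine Nat.mul_le_mul_right _ (Set.ncard_le_ncard ?_ (Set.toFinite _))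
  intro y hy
  obtain ⟨g, hg, rfl⟩ := h y hy
  exact ⟨⟨g, hg⟩, rfl⟩

theorem exists_neighbors {Γ : SimpleGraph V} (hcubic : ∀ v, (Γ.neighborSet v).ncard = 3)
    (v : V) : ∃ a b c, a ≠ b ∧ a ≠ c ∧ b ≠ c ∧ ∀ x, Γ.Adj v x ↔ x = a ∨ x = b ∨ x = c := by
  obtain ⟨a, b, c, h1, h2, h3, h⟩ := Set.ncard_eq_three.1 (hcubic v)
  refine ⟨a, b, c, h1, h2, h3, fun x => ?_⟩
  rw [← SimpleGraph.mem_neighborSet, h]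
  simp

theorem exists_third {Γ : SimpleGraph V} (hcubic : ∀ v, (Γ.neighborSet v).ncard = 3)
    {v a b : V} (ha : Γ.Adj v a) (hb : Γ.Adj v b) (hab : a ≠ b) :
    ∃ c, Γ.Adj v c ∧ c ≠ a ∧ c ≠ b ∧ ∀ x, Γ.Adj v x → x = a ∨ x = b ∨ x = c := by
  obtain ⟨p, q, r, h1, h2, h3, h⟩ := exists_neighbors hcubic v
  have ha' := (h a).1 ha
  have hb' := (h b).1 hb
  rcases ha' with rfl | rfl | rfl <;> rcases hb' with rfl | rfl | rfl
  · exact absurd rfl hab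
  · exact ⟨r, (h r).2 (by simp), h2.symm, h3.symm, fun x hx => by have := (h x).1 hx; tauto⟩
  · exact ⟨q, (h q).2 (by simp), h1.symm, h3, fun x hx => by have := (h x).1 hx; tauto⟩
  · exact ⟨r, (h r).2 (by simp), h3.symm, h2.symm, fun x hx => by have := (h x).1 hx; tauto⟩
  · exact absurd rfl hab
  · exact ⟨p, (h p).2 (by simp), h1, h2, fun x hx => by have := (h x).1 hx; tauto⟩
  · exact ⟨q, (h q).2 (by simp), h3, h1.symm, fun x hx => by have := (h x).1 hx; tauto⟩
  · exact ⟨p, (h p).2 (by simp), h2, h1, fun x hx => by have := (h x).1 hx; tauto⟩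
  · exact absurd rfl hab

/-! ### Local kernels of the normal subgroup -/

theorem conj_mem_localKernel {Γ : SimpleGraph V} {G N : Subgroup (Equiv.Perm V)}
    (hG : ∀ g ∈ G, IsGraphAut Γ g) (hN : ∀ g ∈ G, ∀ n ∈ N, g * n * g⁻¹ ∈ N)
    {g n : Equiv.Perm V} {v : V} (hg : g ∈ G) (hn : n ∈ localKernel Γ N v) :
    g * n * g⁻¹ ∈ localKernel Γ N (g v) := by
  obtain ⟨h1, h2, h3⟩ := hn
  refine ⟨hN g hg n h1, by simp [h2], fun w hw => ?_⟩
  have : Γ.Adj v (g⁻¹ w) := by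
    rw [← hG g hg, apply_inv_self]
    exact hw
  rw [Equiv.Perm.mul_apply, Equiv.Perm.mul_apply, h3 _ this, apply_inv_self]

section core

variable {Γ : SimpleGraph V} {G N : Subgroup (Equiv.Perm V)}

/-- If `N_x^[1] ≤ N_y^[1]` for an edge `xy`, then an element of `G` reversing the edge gives equality,
so this group is normalised by both `N_x` and `N_y` and is therefore trivial. -/
theorem exists_mem_localKernel_not_mem (hconn : Γ.Connected)
    (hG : ∀ g ∈ G, IsGraphAut Γ g)
    (harc : ∀ u v x y : V, Γ.Adj u v → Γ.Adj x y → ∃ g ∈ G, g u = x ∧ g v = y)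
    (hNG : N ≤ G) (hN : ∀ g ∈ G, ∀ n ∈ N, g * n * g⁻¹ ∈ N)
    (hloc : ∀ v w₁ w₂ : V, Γ.Adj v w₁ → Γ.Adj v w₂ → ∃ n ∈ N, n v = v ∧ n w₁ = w₂)
    {x y : V} (hxy : Γ.Adj x y) (hx : localKernel Γ N x ≠ ⊥) :
    ∃ n ∈ localKernel Γ N x, n ∉ localKernel Γ N y := by
  by_contra! hle
  have hge : ∀ n ∈ localKernel Γ N y, n ∈ localKernel Γ N x := by
    intro n hn
    obtain ⟨g, hg, gx, gy⟩ := harc x y y x hxy hxy.symm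
    have h1 := conj_mem_localKernel hG hN (G.inv_mem hg) hn
    have h2 : g⁻¹ y = x := by rw [Equiv.Perm.inv_eq_iff_eq, gx]
    rw [h2] at h1
    have h3 := conj_mem_localKernel hG hN hg (hle _ h1)
    rw [gy] at h3
    simpa [mul_assoc] using h3
  apply hx
  refine fixes_all_of_normalized hconn hG (v := x) (w := y) (fun k hk => hk.2.1)
    (fun k hk => hk.2.2 _ hxy) ?_ ?_
  · intro b hb
    obtain ⟨n, hn, n1, n2⟩ := hloc x y b hxy hb
    refine ⟨n, hNG hn, n1, n2, fun k hk => ?_⟩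
    have h1 := conj_mem_localKernel hG hN (hNG (N.inv_mem hn)) hk
    rw [inv_inv, Equiv.Perm.inv_eq_iff_eq.2 n1.symm] at h1
    exact h1
  · intro b hb
    obtain ⟨n, hn, n1, n2⟩ := hloc y x b hxy.symm hb
    refine ⟨n, hNG hn, n1, n2, fun k hk => ?_⟩
    have h1 := conj_mem_localKernel hG hN (hNG (N.inv_mem hn)) (hle k hk)
    rw [inv_inv, Equiv.Perm.inv_eq_iff_eq.2 n1.symm] at h1
    exact hge _ h1

/-- Since `|N_xy| = |N_x| / 3 ≤ 4`, any proper subgroup of `N_xy` has order at most `2`.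
The element `n` shows that `N_x^[1]` is proper. -/
theorem card_localKernel_le_two [Finite V] (hcubic : ∀ v, (Γ.neighborSet v).ncard = 3)
    (hloc : ∀ v w₁ w₂ : V, Γ.Adj v w₁ → Γ.Adj v w₂ → ∃ n ∈ N, n v = v ∧ n w₁ = w₂)
    {x y : V} (hxy : Γ.Adj x y)
    (hcard : Nat.card (N ⊓ MulAction.stabilizer (Equiv.Perm V) x : Subgroup (Equiv.Perm V)) ≤ 12)
    {n : Equiv.Perm V} (hn : n ∈ localKernel Γ N y) (hnx : n ∉ localKernel Γ N x) :
    Nat.card (localKernel Γ N x) ≤ 2 := by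
  set A := N ⊓ MulAction.stabilizer (Equiv.Perm V) x with hA
  set B := A ⊓ MulAction.stabilizer (Equiv.Perm V) y with hB
  have hAB : 3 * Nat.card B ≤ Nat.card A := by
    rw [← hcubic x]
    apply mul_card_le_of_transitive
    intro z hz
    obtain ⟨m, hm, m1, m2⟩ := hloc x y z hxy hz
    exact ⟨m, ⟨hm, m1⟩, m2⟩
  have hle : localKernel Γ N x ≤ B := fun k hk => ⟨⟨hk.1, hk.2.1⟩, hk.2.2 _ hxy⟩
  have hnB : n ∈ B := ⟨⟨hn.1, hn.2.2 _ hxy.symm⟩, hn.2.1⟩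
  have hne : Nat.card (localKernel Γ N x) ≠ Nat.card B := by
    intro h
    have := Subgroup.eq_of_le_of_card_ge hle h.ge
    exact hnx (this ▸ hnB)
  obtain ⟨q, hq⟩ := Subgroup.card_dvd_of_le hle
  have hpos : 0 < Nat.card B := Nat.card_pos
  have hq2 : 2 ≤ q := by
    rcases q with _ | _ | q
    · simp at hq; omega
    · simp at hq; exact absurd hq.symm hne
    · omega
  nlinarith

theorem eq_of_card_le_two [Finite V] {K : Subgroup (Equiv.Perm V)} (hK : Nat.card K ≤ 2)
    {a b : Equiv.Perm V} (ha : a ∈ K) (hb : b ∈ K) (ha1 : a ≠ 1) (hb1 : b ≠ 1) : a = b := by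
  by_contra hab
  have h1 : ({1, a, b} : Set (Equiv.Perm V)).ncard = 3 :=
    Set.ncard_eq_three.2 ⟨1, a, b, ha1.symm, hb1.symm, hab, rfl⟩
  have h2 : ({1, a, b} : Set (Equiv.Perm V)) ⊆ K := by
    rintro x (rfl | rfl | rfl)
    · exact K.one_mem
    · exact ha
    · exact hb
  have h3 := Set.ncard_le_ncard h2 (Set.toFinite _)
  rw [h1, ← Nat.card_coe_set_eq] at h3
  have : Nat.card K = Nat.card (K : Set (Equiv.Perm V)) := rfl
  omega

/-! ### Local transitivity of a centraliser -/

/-- Elements of `N_v` move any neighbour of `v` to any other while centralising `G_v^[1]`.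
If all `N_x^[1]` are trivial these can be any elements of `N_v`; otherwise the generator of `N_c^[1]`
serves, where `c` is the third neighbour. -/
theorem exists_centralizing [Finite V] (hconn : Γ.Connected)
    (hcubic : ∀ v, (Γ.neighborSet v).ncard = 3)
    (hG : ∀ g ∈ G, IsGraphAut Γ g)
    (harc : ∀ u v x y : V, Γ.Adj u v → Γ.Adj x y → ∃ g ∈ G, g u = x ∧ g v = y)
    (hNG : N ≤ G) (hN : ∀ g ∈ G, ∀ n ∈ N, g * n * g⁻¹ ∈ N)
    (hloc : ∀ v w₁ w₂ : V, Γ.Adj v w₁ → Γ.Adj v w₂ → ∃ n ∈ N, n v = v ∧ n w₁ = w₂)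
    (hcard : ∀ x : V, Nat.card (N ⊓ MulAction.stabilizer (Equiv.Perm V) x :
      Subgroup (Equiv.Perm V)) ≤ 12)
    {v a b : V} (ha : Γ.Adj v a) (hb : Γ.Adj v b) :
    ∃ h ∈ G, h v = v ∧ h a = b ∧ ∀ k ∈ localKernel Γ G v, h⁻¹ * k * h = k := by
  by_cases hab : a = b
  · exact ⟨1, G.one_mem, rfl, hab, by simp⟩
  by_cases hA : ∀ x, localKernel Γ N x = ⊥
  · obtain ⟨n, hn, nv, na⟩ := hloc v a b ha hb
    refine ⟨n, hNG hn, nv, na, fun k hk => ?_⟩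
    -- The commutator `n⁻¹ k n k⁻¹` lies in `N` by normality and fixes the neighbours of `v`.
    have hmem : n⁻¹ * k * n * k⁻¹ ∈ localKernel Γ N v := by
      have hk' := (localKernel Γ G v).inv_mem hk
      have ninv : n⁻¹ v = v := by rw [Equiv.Perm.inv_eq_iff_eq, nv]
      refine ⟨?_, ?_, fun w hw => ?_⟩
      · have := N.mul_mem (N.inv_mem hn) (hN k hk.1 n hn)
        simpa [mul_assoc] using this
      · simp only [Equiv.Perm.mul_apply]
        rw [hk'.2.1, nv, hk.2.1, ninv]
      · have hnw : Γ.Adj v (n w) := by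
          have := (hG n (hNG hn) v w).2 hw
          rwa [nv] at this
        simp only [Equiv.Perm.mul_apply]
        rw [hk'.2.2 w hw, hk.2.2 _ hnw, Equiv.Perm.inv_eq_iff_eq]
    rw [hA v, Subgroup.mem_bot, mul_inv_eq_one] at hmem
    exact hmem
  · push Not at hA
    obtain ⟨x₀, hx₀⟩ := hA
    have hne : ∀ x, localKernel Γ N x ≠ ⊥ := by
      intro x hx
      apply hx₀
      obtain ⟨y₀, _, _, -, -, -, hy₀⟩ := exists_neighbors hcubic x₀
      obtain ⟨y, _, _, -, -, -, hy⟩ := exists_neighbors hcubic x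
      obtain ⟨g, hg, g1, -⟩ := harc x₀ y₀ x y ((hy₀ _).2 (Or.inl rfl)) ((hy _).2 (Or.inl rfl))
      rw [Subgroup.eq_bot_iff_forall]
      intro n hn
      have := conj_mem_localKernel hG hN hg hn
      rw [g1, hx, Subgroup.mem_bot] at this
      simpa using this
    obtain ⟨c, hc, hca, hcb, hall⟩ := exists_third hcubic ha hb hab
    obtain ⟨z, hz, hzv⟩ :=
      exists_mem_localKernel_not_mem hconn hG harc hNG hN hloc hc.symm (hne c)
    obtain ⟨m, hm, hmc⟩ :=
      exists_mem_localKernel_not_mem hconn hG harc hNG hN hloc hc (hne v)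
    have h2 := card_localKernel_le_two hcubic hloc hc.symm (hcard c) hm hmc
    have hz1 : z ≠ 1 := by
      rintro rfl
      exact hzv (Subgroup.one_mem _)
    have hzG := hNG hz.1
    have zv : z v = v := hz.2.2 v hc.symm
    have zc : z c = c := hz.2.1
    have zadj : ∀ x, Γ.Adj v x → Γ.Adj v (z x) := by
      intro x hx
      have := (hG z hzG v x).2 hx
      rwa [zv] at this
    refine ⟨z, hzG, zv, ?_, fun k hk => ?_⟩
    · rcases hall _ (zadj a ha) with h | h | h
      ·
        -- If `z` fixed both `c` and `a`, it would fix the whole neighbourhood of `v`.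
        exfalso
        apply hzv
        have zb : z b = b := by
          rcases hall _ (zadj b hb) with h' | h' | h'
          · exact absurd (z.injective (h.trans h'.symm)) hab
          · exact h'
          · exact absurd (z.injective (zc.trans h'.symm)) hcb
        refine ⟨hz.1, zv, fun x hx => ?_⟩
        rcases hall x hx with rfl | rfl | rfl <;> assumption
      · exact h
      · exact absurd (z.injective (zc.trans h.symm)) hca
    · have h3 := conj_mem_localKernel hG hN hk.1 hz
      rw [hk.2.2 c hc] at h3
      have h4 := eq_of_card_le_two h2 h3 hz (by simpa using hz1) hz1
      rw [mul_inv_eq_iff_eq_mul] at h4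
      rw [mul_assoc, h4, inv_mul_cancel_left]

/-! ### The bound on the stabiliser -/

/-- The bound for two subgroups `N ≤ G` of the symmetric group on the vertices, with `N` normalised
by `G`: fixing in turn `w`, `a` and `c`, where `a, v, w, c` is a walk, cuts `G_v` down by index at most
`3`, `2` and `2`, and what remains is trivial. -/
theorem card_stabilizer_le [Finite V] (hconn : Γ.Connected)
    (hcubic : ∀ v, (Γ.neighborSet v).ncard = 3)
    (hG : ∀ g ∈ G, IsGraphAut Γ g)
    (harc : ∀ u v x y : V, Γ.Adj u v → Γ.Adj x y → ∃ g ∈ G, g u = x ∧ g v = y)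
    (hNG : N ≤ G) (hN : ∀ g ∈ G, ∀ n ∈ N, g * n * g⁻¹ ∈ N)
    (hloc : ∀ v w₁ w₂ : V, Γ.Adj v w₁ → Γ.Adj v w₂ → ∃ n ∈ N, n v = v ∧ n w₁ = w₂)
    (hcard : ∀ x : V, Nat.card (N ⊓ MulAction.stabilizer (Equiv.Perm V) x :
      Subgroup (Equiv.Perm V)) ≤ 12) (v : V) :
    Nat.card (G ⊓ MulAction.stabilizer (Equiv.Perm V) v : Subgroup (Equiv.Perm V)) ≤ 12 := by
  obtain ⟨w, a, a', hwa, hwa', haa', hv⟩ := exists_neighbors hcubic v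
  have hvw : Γ.Adj v w := (hv w).2 (Or.inl rfl)
  obtain ⟨c, c', hcv, hc'v, hcc', hw⟩ : ∃ c c', c ≠ v ∧ c' ≠ v ∧ c ≠ c' ∧
      ∀ x, Γ.Adj w x ↔ x = v ∨ x = c ∨ x = c' := by
    obtain ⟨p, q, r, h1, h2, h3, h⟩ := exists_neighbors hcubic w
    rcases (h v).1 hvw.symm with rfl | rfl | rfl
    · exact ⟨q, r, h1.symm, h2.symm, h3, h⟩
    · exact ⟨p, r, h1, h3.symm, h2, fun x => by rw [h x]; tauto⟩
    · exact ⟨p, q, h2, h3, h1, fun x => by rw [h x]; tauto⟩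
  have hK : localKernel Γ G v ⊓ localKernel Γ G w = ⊥ := by
    refine fixes_all_of_normalized hconn hG (v := v) (w := w) (fun k hk => hk.1.2.1)
      (fun k hk => hk.2.2.1) ?_ ?_
    · intro b hb
      obtain ⟨h, h1, h2, h3, h4⟩ :=
        exists_centralizing hconn hcubic hG harc hNG hN hloc hcard hvw hb
      exact ⟨h, h1, h2, h3, fun k hk => by rw [h4 k hk.1]; exact hk⟩
    · intro b hb
      obtain ⟨h, h1, h2, h3, h4⟩ :=
        exists_centralizing hconn hcubic hG harc hNG hN hloc hcard hvw.symm hb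
      exact ⟨h, h1, h2, h3, fun k hk => by rw [h4 k hk.2]; exact hk⟩
  have adj : ∀ g ∈ G, ∀ x y, g x = x → Γ.Adj x y → Γ.Adj x (g y) := by
    intro g hg x y hgx hxy
    have := (hG g hg x y).2 hxy
    rwa [hgx] at this
  set A₀ := G ⊓ MulAction.stabilizer (Equiv.Perm V) v
  have e₀ := card_le_of_maps A₀ w (Γ.neighborSet v)
    (fun g hg => adj g hg.1 v w hg.2 hvw)
  set A₁ := A₀ ⊓ MulAction.stabilizer (Equiv.Perm V) w
  have e₁ := card_le_of_maps A₁ a {a, a'} (fun g hg => by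
    have h1 := (hv _).1 (adj g hg.1.1 v a hg.1.2 ((hv a).2 (by simp)))
    have h2 : g w = w := hg.2
    rcases h1 with h | h
    · exact absurd (g.injective (h2.trans h.symm)) hwa
    · simpa using h)
  set A₂ := A₁ ⊓ MulAction.stabilizer (Equiv.Perm V) a
  have e₂ := card_le_of_maps A₂ c {c, c'} (fun g hg => by
    have h1 := (hw _).1 (adj g hg.1.1.1 w c hg.1.2 ((hw c).2 (by simp)))
    have h2 : g v = v := hg.1.1.2
    rcases h1 with h | h
    · exact absurd (g.injective (h.trans h2.symm)) hcv
    · simpa using h)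
  have hbot : A₂ ⊓ MulAction.stabilizer (Equiv.Perm V) c = ⊥ := by
    rw [eq_bot_iff, ← hK]
    intro g hg
    have gG : g ∈ G := hg.1.1.1.1
    have gv : g v = v := hg.1.1.1.2
    have gw : g w = w := hg.1.1.2
    have ga : g a = a := hg.1.2
    have gc : g c = c := hg.2
    -- An element fixing a vertex and two of its neighbours fixes the third.
    have ga' : g a' = a' := by
      rcases (hv _).1 (adj g gG v a' gv ((hv a').2 (by simp))) with h | h | h
      · exact absurd (g.injective (gw.trans h.symm)) hwa'
      · exact absurd (g.injective (ga.trans h.symm)) haa'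
      · exact h
    have gc' : g c' = c' := by
      rcases (hw _).1 (adj g gG w c' gw ((hw c').2 (by simp))) with h | h | h
      · exact absurd (g.injective (h.trans gv.symm)) hc'v
      · exact absurd (g.injective (gc.trans h.symm)) hcc'
      · exact h
    refine ⟨⟨gG, gv, fun x hx => ?_⟩, ⟨gG, gw, fun x hx => ?_⟩⟩
    · rcases (hv x).1 hx with rfl | rfl | rfl <;> assumption
    · rcases (hw x).1 hx with rfl | rfl | rfl <;> assumption
  rw [hbot, Subgroup.card_bot, Set.ncard_pair hcc'] at e₂
  rw [Set.ncard_pair haa'] at e₁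
  rw [hcubic v] at e₀
  omega

end core

end CubicStab

/-- Let `Γ` be a cubic `G`-arc-transitive connected graph and `N` a normal
subgroup of `G` that is locally-transitive on `Γ`. If `|N_v| ≤ 12` for every
vertex `v`, then `|G_v| ≤ 12` for every vertex `v`. -/
theorem stabilizer_card_le_of_normal_locally_transitive
    (V : Type*) [Fintype V] (Γ : SimpleGraph V) (hconn : Γ.Connected)
    (hcubic : ∀ v : V, Nat.card (Γ.neighborSet v) = 3)
    (G : Subgroup (Equiv.Perm V))
    (hGaut : ∀ g ∈ G, IsGraphAut Γ g)
    (hGarc : ∀ u v x y : V, Γ.Adj u v → Γ.Adj x y →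
      ∃ g ∈ G, g u = x ∧ g v = y)
    (N : Subgroup ↥G) [N.Normal]
    (hNloc : ∀ v w₁ w₂ : V, Γ.Adj v w₁ → Γ.Adj v w₂ →
      ∃ n ∈ N, (n : Equiv.Perm V) v = v ∧ (n : Equiv.Perm V) w₁ = w₂)
    (hNv : ∀ v : V, Nat.card (MulAction.stabilizer ↥N v) ≤ 12) :
    ∀ v : V, Nat.card (MulAction.stabilizer ↥G v) ≤ 12 := by
  intro v
  have key := CubicStab.card_stabilizer_le (G := G) (N := N.map G.subtype) hconn
    (fun v => by rw [← Nat.card_coe_set_eq]; exact hcubic v) hGaut hGarc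
    (Subgroup.map_subtype_le N) ?_ ?_ ?_ v
  · refine le_of_eq_of_le (Nat.card_congr ?_) key
    exact ⟨fun g => ⟨g.1.1, g.1.2, g.2⟩, fun g => ⟨⟨g.1, g.2.1⟩, g.2.2⟩,
      fun _ => rfl, fun _ => rfl⟩
  · rintro g hg _ ⟨n, hn, rfl⟩
    exact ⟨⟨g, hg⟩ * n * ⟨g, hg⟩⁻¹, Subgroup.Normal.conj_mem inferInstance n hn _, rfl⟩
  · intro v w₁ w₂ h₁ h₂
    obtain ⟨n, hn, h3, h4⟩ := hNloc v w₁ w₂ h₁ h₂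
    exact ⟨n, ⟨n, hn, rfl⟩, h3, h4⟩
  · intro x
    refine le_trans (Nat.card_le_card_of_surjective
      (fun g : MulAction.stabilizer ↥N x =>
        (⟨g.1.1.1, ⟨g.1.1, g.1.2, rfl⟩, g.2⟩ :
          (N.map G.subtype ⊓ MulAction.stabilizer (Equiv.Perm V) x :
            Subgroup (Equiv.Perm V)))) ?_) (hNv x)
    rintro ⟨_, ⟨n, hn, rfl⟩, hx⟩
    exact ⟨⟨⟨n, hn⟩, hx⟩, rfl⟩
end

section
/- Let $\Gamma$ be a finite connected cubic graph and let $G$ be a group of automorphisms of $\Gamma$ such that for every vertex $v$ the stabiliser $G_v$ acts transitively on the neighbourhood $\Gamma(v)$ (i.e., $\Gamma$ is $G$-locally-transitive). If $N$ is a normal subgroup of $G$ such that the quotient $G/N$ is not solvable, then $N$ has at least three orbits on the vertices of $\Gamma$ and $N$ is semiregular on the vertices of $\Gamma$. -/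
/-! ### Solvability of vertex stabilisers -/

lemma isSolvable_perm_of_card_three {α : Type*} (h : Nat.card α = 3) :
    Group.IsSolvable (Equiv.Perm α) := by
  have : Finite α := Nat.finite_of_card_ne_zero (by omega)
  let e : α ≃ Fin 3 := Finite.equivFinOfCardEq h
  have hS : Group.IsSolvable (Equiv.Perm (Fin 3)) := by
    have hc : Nat.card (alternatingGroup (Fin 3)) = 3 := by
      rw [Nat.card_eq_fintype_card]; decide
    have : Fact (Nat.Prime 3) := ⟨Nat.prime_three⟩
    have hcyc : IsCyclic (alternatingGroup (Fin 3)) := isCyclic_of_prime_card hc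
    have hA : Group.IsSolvable (alternatingGroup (Fin 3)) :=
      Group.isSolvable_of_comm fun a b => hcyc.isMulCommutative.is_comm.comm a b
    refine Group.isSolvable_of_ker_le_range (alternatingGroup (Fin 3)).subtype
      (Equiv.Perm.sign (α := Fin 3)) ?_
    rw [Subgroup.range_subtype]
    exact le_rfl
  exact Group.isSolvable_of_isSolvable_injective (f := (e.permCongrHom).toMonoidHom)
    e.permCongrHom.injective

/-- A property that passes along edges of a connected graph and holds somewhere holds
everywhere. -/
lemma connected_induction {V : Type*} {Γ : SimpleGraph V} (hconn : Γ.Connected) {p : V → Prop}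
    (w : V) (hw : p w) (hstep : ∀ u y, Γ.Adj u y → p u → p y) (x : V) : p x := by
  obtain ⟨W⟩ := hconn.preconnected w x
  induction W with
  | nil => exact hw
  | cons h _ ih => exact ih (hstep _ _ h hw)

/-- A group of automorphisms of a connected cubic graph fixing a vertex is solvable. -/
lemma isSolvable_of_fixes {V : Type*} [Fintype V] {Γ : SimpleGraph V} (hconn : Γ.Connected)
    (hcubic : ∀ v : V, Nat.card (Γ.neighborSet v) = 3) (w : V) (k : ℕ) :
    ∀ H : Subgroup (Equiv.Perm V), (∀ g ∈ H, IsGraphAut Γ g) → (∀ g ∈ H, g w = w) →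
      Set.ncard {x : V | ∃ g ∈ H, g x ≠ x} = k → Group.IsSolvable H := by
  induction k using Nat.strong_induction_on with
  | _ k ih =>
  intro H hH hw hk
  by_cases hall : ∀ x, ∀ g ∈ H, g x = x
  · exact Group.isSolvable_of_comm fun a b => by
      have h1 : ∀ a : H, a = 1 := fun a => Subtype.ext (Equiv.ext fun x => hall x a a.2)
      rw [h1 a, h1 b]
  have hedge : ∃ u y, Γ.Adj u y ∧ (∀ g ∈ H, g u = u) ∧ ¬ ∀ g ∈ H, g y = y := by
    by_contra hcon
    push Not at hcon
    exact hall (connected_induction hconn w hw hcon)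
  obtain ⟨u, y, huy, hu, hy⟩ := hedge
  push Not at hy
  have hpres : ∀ g : H, ∀ x, (g : Equiv.Perm V) x ∈ Γ.neighborSet u ↔ x ∈ Γ.neighborSet u := by
    intro g x
    have := hH g g.2 u x
    rw [hu g g.2] at this
    exact this
  let φ : H →* Equiv.Perm (Γ.neighborSet u) := MonoidHom.mk'
    (fun g => (g : Equiv.Perm V).subtypePerm (hpres g)) (fun a b => by ext x; rfl)
  have hφ : ∀ g : H, φ g = 1 → ∀ x, Γ.Adj u x → (g : Equiv.Perm V) x = x := by
    intro g hg x hx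
    exact congrArg Subtype.val (DFunLike.congr_fun hg (⟨x, hx⟩ : Γ.neighborSet u))
  let K : Subgroup (Equiv.Perm V) := φ.ker.map H.subtype
  have hKH : K ≤ H := by
    rintro _ ⟨g, _, rfl⟩
    exact g.2
  have hK : Group.IsSolvable K := by
    refine ih _ ?_ K (fun g hg => hH g (hKH hg)) (fun g hg => hw g (hKH hg)) rfl
    rw [← hk]
    refine Set.ncard_lt_ncard ⟨fun x ⟨g, hg, hx⟩ => ⟨g, hKH hg, hx⟩, fun hsub => ?_⟩
      (Set.toFinite _)
    obtain ⟨g, ⟨g', hg', rfl⟩, hgy⟩ := hsub hy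
    exact hgy (hφ g' hg' y huy)
  have := isSolvable_perm_of_card_three (hcubic u)
  refine Group.isSolvable_of_ker_le_range (Subgroup.inclusion hKH) φ fun g hg => ?_
  exact ⟨⟨g, ⟨g, hg, rfl⟩⟩, rfl⟩

/-! ### Solvability of the quotient -/

/-- Permutations preserving an equivalence relation with at most two classes act on the classes
through an abelian group, so their commutators fix each class. -/
lemma commutator_rel {V : Type*} {r : V → V → Prop} (hr : Equivalence r)
    (h2 : ∀ a b c, r a b ∨ r b c ∨ r a c) (g h : Equiv.Perm V)
    (hg : ∀ a b, r (g a) (g b) ↔ r a b) (hh : ∀ a b, r (h a) (h b) ↔ r a b) (w : V) :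
    r w ((g * h * g⁻¹ * h⁻¹) w) := by
  have key : ∀ k : Equiv.Perm V, (∀ a b, r (k a) (k b) ↔ r a b) → ∀ x y,
      r (k x) x → r (k y) y := by
    intro k hk x y hx
    by_cases hxy : r x y
    · exact hr.trans ((hk y x).2 (hr.symm hxy)) (hr.trans hx hxy)
    · rcases h2 x y (k y) with h | h | h
      · exact absurd h hxy
      · exact hr.symm h
      · exact absurd ((hk x y).1 (hr.trans hx h)) hxy
  obtain ⟨z, rfl⟩ : ∃ z, w = h (g z) := ⟨g⁻¹ (h⁻¹ w), by simp⟩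
  have e : (g * h * g⁻¹ * h⁻¹) (h (g z)) = g (h z) := by simp
  rw [e]
  have sg := key g hg
  have sh := key h hh
  by_cases a : r (g z) z <;> by_cases b : r (h z) z
  · exact hr.trans (hr.trans (sh _ (g z) b) a) (hr.symm (hr.trans (sg _ (h z) a) b))
  · have a' := sg _ (h z) a
    exact hr.trans ((hh _ _).2 a) (hr.symm a')
  · have b' := sh _ (g z) b
    exact hr.trans b' ((hg _ _).2 (hr.symm b))
  · have a' : ¬ r (g (h z)) (h z) := fun h => a (sg _ _ h)
    have b' : ¬ r (h (g z)) (g z) := fun h => b (sh _ _ h)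
    have c1 : r (h (g z)) z := by
      rcases h2 (h (g z)) (g z) z with h | h | h
      · exact absurd h b'
      · exact absurd h a
      · exact h
    have c2 : r (g (h z)) z := by
      rcases h2 (g (h z)) (h z) z with h | h | h
      · exact absurd h a'
      · exact absurd h b
      · exact h
    exact hr.trans c1 (hr.symm c2)

/-- If a `G`-invariant equivalence relation has at most two classes and the class of `w` lies in
the `N`-orbit of `w`, then `G/N` is solvable. -/
lemma isSolvable_quotient {V : Type*} [Fintype V] {Γ : SimpleGraph V} (hconn : Γ.Connected)
    (hcubic : ∀ v : V, Nat.card (Γ.neighborSet v) = 3)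
    (G : Subgroup (Equiv.Perm V)) (hGaut : ∀ g ∈ G, IsGraphAut Γ g)
    (N : Subgroup ↥G) [N.Normal] {r : V → V → Prop} (hr : Equivalence r)
    (h2 : ∀ a b c, r a b ∨ r b c ∨ r a c) (hG : ∀ g ∈ G, ∀ a b, r a b → r (g a) (g b))
    (w : V) (hw : ∀ x, r w x → ∃ n ∈ N, (n : Equiv.Perm V) w = x) :
    Group.IsSolvable (↥G ⧸ N) := by
  have hG' : ∀ g : G, ∀ a b, r ((g : Equiv.Perm V) a) ((g : Equiv.Perm V) b) ↔ r a b := by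
    intro g a b
    refine ⟨fun h => ?_, hG g g.2 a b⟩
    simpa using hG _ (g⁻¹).2 _ _ h
  let S : Subgroup G := MulAction.stabilizer G w
  have hSmem : ∀ g : G, g ∈ S ↔ (g : Equiv.Perm V) w = w := fun g => Iff.rfl
  have hS : Group.IsSolvable S := by
    have h1 : Group.IsSolvable (S.map G.subtype) := by
      refine isSolvable_of_fixes hconn hcubic w _ _ ?_ ?_ rfl
      · rintro _ ⟨g, _, rfl⟩
        exact hGaut g g.2
      · rintro _ ⟨g, hg, rfl⟩
        exact hg
    exact Group.isSolvable_of_isSolvable_injective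
      (f := (S.equivMapOfInjective G.subtype G.subtype_injective).toMonoidHom)
      (S.equivMapOfInjective G.subtype G.subtype_injective).injective
  have hle : commutator (G ⧸ N) ≤ S.map (QuotientGroup.mk' N) := by
    rw [commutator_def, Subgroup.commutator_le]
    rintro a - b -
    obtain ⟨g, rfl⟩ := QuotientGroup.mk'_surjective N a
    obtain ⟨h, rfl⟩ := QuotientGroup.mk'_surjective N b
    obtain ⟨n, hn, hnw⟩ := hw _ (commutator_rel hr h2 g h (hG' g) (hG' h) w)
    refine ⟨n⁻¹ * (g * h * g⁻¹ * h⁻¹), ?_, ?_⟩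
    · rw [SetLike.mem_coe, hSmem]
      change ((n : Equiv.Perm V))⁻¹ (((g : Equiv.Perm V) * h * (g : Equiv.Perm V)⁻¹ *
        (h : Equiv.Perm V)⁻¹) w) = w
      rw [← hnw]
      simp
    · have : QuotientGroup.mk' N n = 1 := (QuotientGroup.eq_one_iff n).2 hn
      rw [map_mul, map_inv, this, inv_one, one_mul, commutatorElement_def]
      simp only [map_mul, map_inv]
  have hM : Group.IsSolvable (S.map (QuotientGroup.mk' N)) :=
    Group.isSolvable_of_surjective ((QuotientGroup.mk' N).subgroupMap_surjective S)
  refine Group.isSolvable_of_ker_le_range (S.map (QuotientGroup.mk' N)).subtype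
    (Abelianization.of (G := G ⧸ N)) ?_
  rw [Abelianization.ker_of, Subgroup.range_subtype]
  exact hle

/-! ### Even walks -/

/-- Two vertices are joined by a walk of even length: the reflexive transitive closure of having a
common neighbour. -/
def EvenRel {V : Type*} (Γ : SimpleGraph V) : V → V → Prop :=
  Relation.ReflTransGen fun x y => ∃ z, Γ.Adj x z ∧ Γ.Adj z y

lemma evenRel_equivalence {V : Type*} (Γ : SimpleGraph V) : Equivalence (EvenRel Γ) where
  refl _ := Relation.ReflTransGen.refl
  symm h := by
    have : Std.Symm fun x y => ∃ z, Γ.Adj x z ∧ Γ.Adj z y :=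
      ⟨fun _ _ ⟨z, h1, h2⟩ => ⟨z, h2.symm, h1.symm⟩⟩
    exact Relation.ReflTransGen.stdSymm.symm _ _ h
  trans h1 h2 := Relation.ReflTransGen.trans h1 h2

/-- Prolonging an even walk by one edge at each end gives an even walk. -/
lemma EvenRel.adj {V : Type*} {Γ : SimpleGraph V} {x x' y y' : V} (h : EvenRel Γ x x')
    (hy : Γ.Adj x y) (hy' : Γ.Adj x' y') : EvenRel Γ y y' := by
  unfold EvenRel at h
  induction h generalizing y' with
  | refl => exact Relation.ReflTransGen.single ⟨x, hy.symm, hy'⟩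
  | @tail b c hb hbc ih =>
    obtain ⟨z, h1, h2⟩ := hbc
    exact (ih h1).tail ⟨c, h2, hy'⟩

lemma evenRel_two_classes {V : Type*} {Γ : SimpleGraph V} (hconn : Γ.Connected) {v w : V}
    (hvw : Γ.Adj v w) (a b c : V) : EvenRel Γ a b ∨ EvenRel Γ b c ∨ EvenRel Γ a c := by
  have E := evenRel_equivalence Γ
  have h : ∀ x, EvenRel Γ v x ∨ EvenRel Γ w x :=
    connected_induction hconn v (Or.inl (E.refl v)) fun u y huy hu =>
      hu.symm.imp (fun h => h.adj hvw.symm huy) (fun h => h.adj hvw huy)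
  rcases h a with ha | ha <;> rcases h b with hb | hb <;> rcases h c with hc | hc
  all_goals first
    | exact Or.inl (E.trans (E.symm ha) hb)
    | exact Or.inr (Or.inl (E.trans (E.symm hb) hc))
    | exact Or.inr (Or.inr (E.trans (E.symm ha) hc))

/-! ### Orbits of normal subgroups -/

/-- A symmetric and transitive relation on three points, each related to some other point, relates
any two points. -/
lemma rel_of_card_three {α : Type*} (h3 : Nat.card α = 3) {r : α → α → Prop}
    (hs : ∀ a b, r a b → r b a) (ht : ∀ a b c, r a b → r b c → r a c)
    (hne : ∀ a, ∃ b, b ≠ a ∧ r a b) (x y : α) : r x y := by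
  by_contra hxy
  obtain ⟨x', hx', hxx'⟩ := hne x
  obtain ⟨y', hy', hyy'⟩ := hne y
  have hrx : r x x := ht _ _ _ hxx' (hs _ _ hxx')
  have d1 : x ≠ y := fun h => hxy (h ▸ hrx)
  have d2 : x' ≠ y := fun h => hxy (h ▸ hxx')
  have d3 : y' ≠ x := fun h => hxy (hs _ _ (h ▸ hyy'))
  have d4 : x' ≠ y' := fun h => hxy (ht _ _ _ hxx' (h ▸ hs _ _ hyy'))
  have : Finite α := Nat.finite_of_card_ne_zero (by omega)
  have : Fintype α := Fintype.ofFinite α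
  classical
  have hc : ({x, x', y, y'} : Finset α).card = 4 := by
    rw [Finset.card_eq_succ]
    refine ⟨x, {x', y, y'}, ?_, rfl, ?_⟩
    · simp [hx'.symm, d1, d3.symm]
    · rw [Finset.card_eq_three]
      exact ⟨x', y, y', d2, d4, hy'.symm, rfl⟩
  have := Finset.card_le_univ ({x, x', y, y'} : Finset α)
  rw [hc, ← Nat.card_eq_fintype_card, h3] at this
  omega

/-- Let `Γ` be a `G`-locally-transitive connected cubic graph. If `N` is a
normal subgroup of `G` such that `G/N` is insoluble, then `N` has at least
three orbits and is semiregular on the vertices of `Γ`. -/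
theorem semiregular_of_insoluble_quotient
    (V : Type*) [Fintype V] (Γ : SimpleGraph V) (hconn : Γ.Connected)
    (hcubic : ∀ v : V, Nat.card (Γ.neighborSet v) = 3)
    (G : Subgroup (Equiv.Perm V))
    (hGaut : ∀ g ∈ G, IsGraphAut Γ g)
    (hGloc : ∀ v w₁ w₂ : V, Γ.Adj v w₁ → Γ.Adj v w₂ →
      ∃ g ∈ G, g v = v ∧ g w₁ = w₂)
    (N : Subgroup ↥G) [N.Normal]
    (hquot : ¬ IsSolvable (↥G ⧸ N)) :
    3 ≤ Nat.card (MulAction.orbitRel.Quotient ↥N V) ∧ IsSemiregular ↥N V := by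
  constructor
  · by_contra hlt
    change ¬ Group.IsSolvable _ at hquot
    apply hquot
    obtain ⟨w⟩ := hconn.nonempty
    have hiff : ∀ a b, MulAction.orbitRel N V a b ↔ ∃ n ∈ N, (n : Equiv.Perm V) b = a := by
      intro a b
      rw [MulAction.orbitRel_apply]
      exact ⟨fun ⟨n, h⟩ => ⟨n, n.2, h⟩, fun ⟨n, hn, h⟩ => ⟨⟨n, hn⟩, h⟩⟩
    refine isSolvable_quotient hconn hcubic G hGaut N (MulAction.orbitRel N V).iseqv ?_ ?_ w ?_
    · intro a b c
      by_contra! hcon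
      obtain ⟨h1, h2, h3⟩ := hcon
      classical
      let q : V → MulAction.orbitRel.Quotient N V := Quotient.mk _
      have hq : ∀ {a b}, q a = q b → MulAction.orbitRel N V a b := fun h => Quotient.exact h
      have : Fintype (MulAction.orbitRel.Quotient N V) := Fintype.ofFinite _
      have hc : ({q a, q b, q c} : Finset _).card = 3 :=
        Finset.card_eq_three.2 ⟨_, _, _, fun h => h1 (hq h), fun h => h3 (hq h),
          fun h => h2 (hq h), rfl⟩
      have := Finset.card_le_univ ({q a, q b, q c} : Finset _)
      rw [hc, ← Nat.card_eq_fintype_card] at this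
      exact hlt this
    · intro g hg a b hab
      obtain ⟨n, hn, rfl⟩ := (hiff _ _).1 hab
      refine (hiff _ _).2 ⟨⟨g, hg⟩ * n * ⟨g, hg⟩⁻¹, Subgroup.Normal.conj_mem ‹_› n hn _, ?_⟩
      simp
    · intro x hx
      exact (hiff _ _).1 ((MulAction.orbitRel N V).iseqv.symm hx)
  · by_contra hns
    change ¬ Group.IsSolvable _ at hquot
    apply hquot
    unfold IsSemiregular at hns
    push Not at hns
    obtain ⟨n, ⟨v₀, hv₀⟩, hn1⟩ := hns
    -- Some `N_v` acts nontrivially on `Γ(v)`; otherwise `n` would fix every vertex.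
    have hmove : ∃ v a, Γ.Adj v a ∧ ∃ m ∈ N, (m : Equiv.Perm V) v = v ∧
        (m : Equiv.Perm V) a ≠ a := by
      by_contra hcon
      push Not at hcon
      apply hn1
      have hfix := connected_induction (p := fun x => ((n : G) : Equiv.Perm V) x = x) hconn v₀ hv₀
        fun u y huy hu => hcon u y huy n n.2 hu
      exact Subtype.ext (Subtype.ext (Equiv.ext hfix))
    obtain ⟨v, a, hva, m, hm, hmv, hma⟩ := hmove
    -- `N_v` is transitive on `Γ(v)`, since conjugates of `m` under `G_v` move every neighbour.
    have htrans : ∀ x y, Γ.Adj v x → Γ.Adj v y →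
        ∃ k ∈ N, (k : Equiv.Perm V) v = v ∧ (k : Equiv.Perm V) x = y := by
      intro x y hx hy
      refine rel_of_card_three (hcubic v) (r := fun x y => ∃ k ∈ N, (k : Equiv.Perm V) v = v ∧
        (k : Equiv.Perm V) x = y) ?_ ?_ ?_ ⟨x, hx⟩ ⟨y, hy⟩
      · rintro b c ⟨k, hk, hkv, hkb⟩
        refine ⟨k⁻¹, N.inv_mem hk, ?_, ?_⟩
        · exact (Equiv.symm_apply_eq _).2 hkv.symm
        · exact (Equiv.symm_apply_eq _).2 hkb.symm
      · rintro b c d ⟨k, hk, hkv, hkb⟩ ⟨l, hl, hlv, hlc⟩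
        exact ⟨l * k, N.mul_mem hl hk, by simp [hkv, hlv], by simp [hkb, hlc]⟩
      · rintro ⟨c, hc⟩
        obtain ⟨g, hg, hgv, hga⟩ := hGloc v a c hva hc
        have hgv' : g⁻¹ v = v := by rw [Equiv.Perm.inv_eq_iff_eq, hgv]
        have hga' : g⁻¹ c = a := by rw [Equiv.Perm.inv_eq_iff_eq, hga]
        have hadj : Γ.Adj v (g (m.1 a)) := by
          have h1 := (hGaut m m.2 v a).2 hva
          have h2 := (hGaut g hg _ _).2 h1
          rwa [hmv, hgv] at h2
        refine ⟨⟨g (m.1 a), hadj⟩, ?_, ⟨g, hg⟩ * m * ⟨g, hg⟩⁻¹,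
          Subgroup.Normal.conj_mem ‹_› m hm _, ?_, ?_⟩
        · intro h
          have h' : g (m.1 a) = c := congrArg Subtype.val h
          rw [← hga] at h'
          exact hma (g.injective h')
        · change g (m.1 (g⁻¹ v)) = v
          rw [hgv', hmv, hgv]
        · change g (m.1 (g⁻¹ c)) = g (m.1 a)
          rw [hga']
    -- Vertices joined by an even walk to `v` are `G`-conjugate to `v`.
    have hconj : ∀ u, EvenRel Γ v u → ∃ g ∈ G, g v = u := by
      intro u hu
      unfold EvenRel at hu
      induction hu with
      | refl => exact ⟨1, G.one_mem, rfl⟩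
      | tail _ hbc ih =>
        obtain ⟨g, hg, rfl⟩ := ih
        obtain ⟨z, h1, h2⟩ := hbc
        obtain ⟨h, hh, -, rfl⟩ := hGloc z _ _ h1.symm h2
        exact ⟨h * g, G.mul_mem hh hg, rfl⟩
    have hgood : ∀ u, EvenRel Γ v u → ∀ x y, Γ.Adj u x → Γ.Adj u y →
        ∃ k ∈ N, (k : Equiv.Perm V) x = y := by
      intro u hu x y hx hy
      obtain ⟨g, hg, rfl⟩ := hconj u hu
      have hback : ∀ x, Γ.Adj (g v) x → Γ.Adj v (g⁻¹ x) := by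
        intro x hx
        have := (hGaut g hg v (g⁻¹ x)).1
        exact this (by simpa using hx)
      obtain ⟨k, hk, -, hkx⟩ := htrans _ _ (hback x hx) (hback y hy)
      refine ⟨⟨g, hg⟩ * k * ⟨g, hg⟩⁻¹, Subgroup.Normal.conj_mem ‹_› k hk _, ?_⟩
      have : g (k.1 (g⁻¹ x)) = y := by rw [hkx]; simp
      simpa using this
    refine isSolvable_quotient hconn hcubic G hGaut N (evenRel_equivalence Γ)
      (evenRel_two_classes hconn hva) ?_ a ?_
    · intro g hg b c hbc
      refine Relation.ReflTransGen.lift g ?_ _ _ hbc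
      rintro p q ⟨z, h1, h2⟩
      exact ⟨g z, (hGaut g hg _ _).2 h1, (hGaut g hg _ _).2 h2⟩
    · intro x hx
      have hx' : Relation.ReflTransGen (fun x y => ∃ z, Γ.Adj x z ∧ Γ.Adj z y) a x := hx
      clear hx
      induction hx' with
      | refl => exact ⟨1, N.one_mem, rfl⟩
      | tail hb hbc ih =>
        obtain ⟨k, hk, rfl⟩ := ih
        obtain ⟨z, h1, h2⟩ := hbc
        obtain ⟨l, hl, rfl⟩ := hgood z (EvenRel.adj hb hva.symm h1) _ _ h1.symm h2
        exact ⟨l * k, N.mul_mem hl hk, rfl⟩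
end

section
/- Let $t \geq 0$ be an integer, let $\Gamma$ be a finite connected cubic graph, and let $G$ be a group of automorphisms of $\Gamma$ acting regularly on the set of $(t+1)$-arcs of $\Gamma$ (i.e., $\Gamma$ is $(G,t+1)$-arc-regular). Suppose $G$ is not solvable, and let $S$ be the soluble radical of $G$ (the largest solvable normal subgroup). If $C$ is a cyclic subgroup of $G$ that is semiregular on the vertices with an odd number of orbits, then $|C \cap S|$ is odd and $|G/S : CS/S|_2 \cdot |S|_2 = 2^t$, where $n_2$ denotes the largest power of $2$ dividing $n$. -/
/-- An `n`-arc of `Γ` is a sequence of `n + 1` vertices such that consecutive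
vertices are adjacent and repeated vertices are more than `2` steps apart. -/
def IsNArc {V : Type*} (Γ : SimpleGraph V) (n : ℕ) (f : Fin (n + 1) → V) : Prop :=
  (∀ i : Fin n, Γ.Adj (f i.castSucc) (f i.succ)) ∧
  ∀ i j : Fin (n + 1), i < j → f i = f j → 2 < (j : ℕ) - (i : ℕ)

/-- `G` acts regularly on the `n`-arcs of `Γ`. -/
def ArcRegular {V : Type*} (Γ : SimpleGraph V) (G : Subgroup (Equiv.Perm V))
    (n : ℕ) : Prop :=
  ∀ a b : Fin (n + 1) → V, IsNArc Γ n a → IsNArc Γ n b →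
    ∃! g : ↥G, ∀ i, (g : Equiv.Perm V) (a i) = b i

/-- The `2`-part of a natural number. -/
def twoPart (n : ℕ) : ℕ := 2 ^ (n.factorization 2)

/-! ### Groups -/

/-- A group of order `3 * 2 ^ t` is soluble: it acts on the three cosets of a Sylow 2-subgroup with
kernel a 2-group. -/
theorem isSolvable_of_card_eq {H : Type*} [Group H] [Finite H] {t : ℕ}
    (hH : Nat.card H = 3 * 2 ^ t) : Group.IsSolvable H := by
  have : Fact (Nat.Prime 2) := ⟨Nat.prime_two⟩
  obtain ⟨P, hP⟩ := Sylow.exists_subgroup_card_pow_prime (G := H) 2 (n := t) ⟨3, by rw [hH]; ring⟩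
  have hidx : P.index = 3 := by
    have := P.card_mul_index
    rw [hP, hH, mul_comm] at this
    exact Nat.eq_of_mul_eq_mul_right (by positivity) this
  have hPp : IsPGroup 2 P := IsPGroup.of_card hP
  have : Group.IsSolvable P := by
    have := hPp.isNilpotent
    infer_instance
  let f : H →* Equiv.Perm (H ⧸ P) := MulAction.toPermHom H (H ⧸ P)
  have hperm : Group.IsSolvable (Equiv.Perm (H ⧸ P)) := by
    have hc : Nat.card (Equiv.Perm (H ⧸ P)) = 6 := by
      rw [Nat.card_perm, ← Subgroup.index_eq_card, hidx]; rfl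
    have : IsZGroup (Equiv.Perm (H ⧸ P)) := IsZGroup.of_squarefree (by
      rw [hc, Nat.squarefree_iff_prime_squarefree]
      intro p hp h
      have := Nat.le_of_dvd (by norm_num) h
      have : p ≤ 2 := by nlinarith
      have := hp.two_le
      obtain rfl : p = 2 := by omega
      omega)
    infer_instance
  refine Group.isSolvable_of_ker_le_range P.subtype f ?_
  rw [Subgroup.range_subtype, ← Subgroup.normalCore_eq_ker]
  exact P.normalCore_le

/-- A cyclic group has at most one involution. -/
theorem IsCyclic.eq_of_orderOf_two {H : Type*} [Group H] [Finite H] [IsCyclic H] {x y : H}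
    (hx : orderOf x = 2) (hy : orderOf y = 2) : x = y := by
  classical
  have := Fintype.ofFinite H
  have hle := IsCyclic.card_pow_eq_one_le (α := H) (n := 2) (by norm_num)
  by_contra hne
  have hx1 : x ≠ 1 := by rintro rfl; simp at hx
  have hy1 : y ≠ 1 := by rintro rfl; simp at hy
  have hsub : ({1, x, y} : Finset H) ⊆ Finset.univ.filter (fun a : H => a ^ 2 = 1) := by
    intro a ha
    simp only [Finset.mem_insert, Finset.mem_singleton] at ha
    simp only [Finset.mem_filter, Finset.mem_univ, true_and]
    rcases ha with rfl | rfl | rfl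
    · simp
    · rw [← hx, pow_orderOf_eq_one]
    · rw [← hy, pow_orderOf_eq_one]
  have h3 : ({1, x, y} : Finset H).card = 3 := by
    rw [Finset.card_eq_three]
    exact ⟨1, x, y, hx1.symm, hy1.symm, hne, rfl⟩
  have := Finset.card_le_card hsub
  omega

theorem card_eq_of_semiregular {H X : Type*} [Group H] [MulAction H X] [Finite X] [Finite H]
    (h : IsSemiregular H X) :
    Nat.card X = Nat.card H * Nat.card (MulAction.orbitRel.Quotient H X) := by
  classical
  have := Fintype.ofFinite (MulAction.orbitRel.Quotient H X)
  rw [Nat.card_congr (MulAction.selfEquivSigmaOrbitsQuotientStabilizer H X), Nat.card_sigma]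
  have hstab : ∀ x : X, MulAction.stabilizer H x = ⊥ := fun x =>
    (Subgroup.eq_bot_iff_forall _).2 fun g hg => h g ⟨x, hg⟩
  have hc : ∀ ω : MulAction.orbitRel.Quotient H X,
      Nat.card (H ⧸ MulAction.stabilizer H ω.out) = Nat.card H := fun ω => by
    rw [hstab, ← Subgroup.index_eq_card, Subgroup.index_bot]
  simp only [hc, Finset.sum_const, Finset.card_univ, smul_eq_mul, Nat.card_eq_fintype_card]
  ring

/-- `|G/S : CS/S| |S| |C| = |G| |C ∩ S|`. -/
theorem index_map_mul_card {H : Type*} [Group H] [Finite H] (S : Subgroup H) [S.Normal]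
    (C : Subgroup H) :
    (C.map (QuotientGroup.mk' S)).index * Nat.card S * Nat.card C
      = Nat.card H * Nat.card ↥(C ⊓ S) := by
  have h1 := (C.map (QuotientGroup.mk' S)).card_mul_index
  have h2 := S.card_eq_card_quotient_mul_card_subgroup
  have h3 : Nat.card (C.map (QuotientGroup.mk' S)) * Nat.card ↥(C ⊓ S) = Nat.card C := by
    let f := (QuotientGroup.mk' S).subgroupMap C
    have hs : Function.Surjective f := (QuotientGroup.mk' S).subgroupMap_surjective C
    have hk : Nat.card f.ker = Nat.card ↥(C ⊓ S) := by
      refine Nat.card_congr ⟨fun x => ⟨x.1.1, x.1.2, ?_⟩, fun x => ⟨⟨x.1, x.2.1⟩, ?_⟩,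
        fun x => rfl, fun x => rfl⟩
      · have := congrArg Subtype.val (MonoidHom.mem_ker.1 x.2)
        exact (QuotientGroup.eq_one_iff _).1 this
      · exact MonoidHom.mem_ker.2 (Subtype.ext ((QuotientGroup.eq_one_iff _).2 x.2.2))
    have := f.ker.card_mul_index
    rw [Subgroup.index_ker, f.range_eq_top_of_surjective hs, hk, Subgroup.card_top] at this
    rw [mul_comm]; exact this
  rw [h2, ← h1, ← h3]
  ring

/-! ### Two-parts -/

theorem twoPart_mul {a b : ℕ} (ha : a ≠ 0) (hb : b ≠ 0) :
    twoPart (a * b) = twoPart a * twoPart b := by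
  simp [twoPart, Nat.factorization_mul ha hb, pow_add]

theorem twoPart_pow_mul_odd (t : ℕ) {k : ℕ} (hk : Odd k) : twoPart (2 ^ t * k) = 2 ^ t := by
  have hk0 : k ≠ 0 := by rintro rfl; simp at hk
  have h2 : k.factorization 2 = 0 :=
    Nat.factorization_eq_zero_of_not_dvd hk.not_two_dvd_nat
  rw [twoPart, Nat.factorization_mul (by positivity) hk0]
  simp [h2, Nat.prime_two.factorization_pow]

/-! ### Counting arcs of a cubic graph -/

section Arcs

variable {V : Type*} {Γ : SimpleGraph V}

/-- Vertices one step apart differ because they are adjacent, so only vertices two steps apart need to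
be required distinct. -/
theorem isNArc_iff {n : ℕ} {f : Fin (n + 2) → V} :
    IsNArc Γ (n + 1) f ↔ (∀ i : Fin (n + 1), Γ.Adj (f i.castSucc) (f i.succ)) ∧
      ∀ i : Fin n, f i.castSucc.castSucc ≠ f i.succ.succ := by
  refine and_congr_right fun hadj => ⟨fun h i hi => ?_, fun h i j hij hf => ?_⟩
  · have := h i.castSucc.castSucc i.succ.succ (by simp [Fin.lt_def]) hi
    simp at this
    omega
  · by_contra hle
    have hlt : (i : ℕ) < j := hij
    rcases (by omega : (j : ℕ) = i + 1 ∨ (j : ℕ) = i + 2) with h1 | h2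
    · have := hadj ⟨i, by omega⟩
      have e : (⟨i, by omega⟩ : Fin (n + 1)).succ = j := Fin.ext (by simp [h1])
      have e' : (⟨i, by omega⟩ : Fin (n + 1)).castSucc = i := Fin.ext (by simp)
      rw [e, e', hf] at this
      exact Γ.irrefl this
    · have := h ⟨i, by omega⟩
      have e : (⟨i, by omega⟩ : Fin n).succ.succ = j := Fin.ext (by simp [h2])
      have e' : (⟨i, by omega⟩ : Fin n).castSucc.castSucc = i := Fin.ext (by simp)
      rw [e, e'] at this
      exact this hf

theorem isNArc_succ_iff {n : ℕ} {f : Fin (n + 3) → V} :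
    IsNArc Γ (n + 2) f ↔ Γ.Adj (f 0) (f 1) ∧ f 0 ≠ f 2 ∧ IsNArc Γ (n + 1) (Fin.tail f) := by
  rw [isNArc_iff, isNArc_iff]
  constructor
  · rintro ⟨h1, h2⟩
    exact ⟨h1 0, h2 0, fun i => h1 i.succ, fun i => h2 i.succ⟩
  · rintro ⟨h1, h2, h3, h4⟩
    exact ⟨Fin.cases h1 h3, Fin.cases h2 h4⟩

/-- The `(n + 1)`-arcs whose first two vertices are `u` and `v`. -/
abbrev ArcsFrom (Γ : SimpleGraph V) (n : ℕ) (u v : V) : Type _ :=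
  {f : Fin (n + 2) → V // IsNArc Γ (n + 1) f ∧ f 0 = u ∧ f 1 = v}

/-- An arc starting with `u, v` is `u` followed by an arc starting at `v` that does not return
to `u` at once. -/
def arcsFromSuccEquiv (n : ℕ) {u v : V} (huv : Γ.Adj u v) :
    ArcsFrom Γ (n + 1) u v ≃ Σ w : {w : V // Γ.Adj v w ∧ w ≠ u}, ArcsFrom Γ n v w where
  toFun f := ⟨⟨f.1 2, by
      obtain ⟨f, hf, rfl, rfl⟩ := f
      obtain ⟨-, h, h'⟩ := isNArc_succ_iff.1 hf
      exact ⟨h'.1 0, h.symm⟩⟩,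
    ⟨Fin.tail f.1, (isNArc_succ_iff.1 f.2.1).2.2, f.2.2.2, rfl⟩⟩
  invFun p := ⟨Fin.cons u p.2.1, by
    obtain ⟨⟨w, hw, hwu⟩, f, hf, h0, h1⟩ := p
    refine ⟨isNArc_succ_iff.2 ⟨?_, ?_, by simpa using hf⟩, rfl, h0⟩
    · change Γ.Adj u (f 0)
      rwa [h0]
    · change u ≠ f 1
      rw [h1]; exact hwu.symm⟩
  left_inv f := by
    obtain ⟨f, hf, rfl, rfl⟩ := f
    exact Subtype.ext (Fin.cons_self_tail f)
  right_inv p := by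
    obtain ⟨⟨w, hw⟩, f, hf, h0, h1⟩ := p
    obtain rfl : f 1 = w := h1
    rfl

theorem card_arcsFrom [Fintype V] (hcubic : ∀ v : V, Nat.card (Γ.neighborSet v) = 3) (n : ℕ) :
    ∀ u v : V, Γ.Adj u v → Nat.card (ArcsFrom Γ n u v) = 2 ^ n := by
  classical
  induction n with
  | zero =>
    intro u v huv
    rw [pow_zero, Nat.card_eq_one_iff_unique]
    refine ⟨⟨fun f g => Subtype.ext (funext fun i => ?_)⟩, ⟨⟨![u, v], ?_, rfl, rfl⟩⟩⟩
    · obtain ⟨f, hf, hf0, hf1⟩ := f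
      obtain ⟨g, hg, hg0, hg1⟩ := g
      fin_cases i
      · exact hf0.trans hg0.symm
      · exact hf1.trans hg1.symm
    · refine isNArc_iff.2 ⟨fun i => ?_, fun i => i.elim0⟩
      fin_cases i
      exact huv
  | succ n ih =>
    intro u v huv
    rw [Nat.card_congr (arcsFromSuccEquiv n huv), Nat.card_sigma,
      Finset.sum_congr rfl (fun w _ => ih v w.1 w.2.1), Finset.sum_const, Finset.card_univ,
      smul_eq_mul, pow_succ']
    congr 1
    have h3 : (Γ.neighborSet v).ncard = 3 := hcubic v
    have h2 := Set.ncard_sdiff_singleton_of_mem (s := Γ.neighborSet v) (a := u) huv.symm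
    rw [← Nat.card_eq_fintype_card]
    change ((Γ.neighborSet v) \ {u}).ncard = 2
    rw [h2, h3]

theorem exists_arc_of_dart [Fintype V] (hcubic : ∀ v : V, Nat.card (Γ.neighborSet v) = 3) (n : ℕ)
    (u v : V) (huv : Γ.Adj u v) :
    ∃ f : Fin (n + 2) → V, IsNArc Γ (n + 1) f ∧ f 0 = u ∧ f 1 = v := by
  have h : 0 < Nat.card (ArcsFrom Γ n u v) := by
    rw [card_arcsFrom hcubic n u v huv]; positivity
  obtain ⟨f⟩ := (Nat.card_pos_iff.1 h).1
  exact ⟨f.1, f.2⟩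

theorem card_dart [Fintype V] (hcubic : ∀ v : V, Nat.card (Γ.neighborSet v) = 3) :
    Nat.card Γ.Dart = 3 * Nat.card V := by
  classical
  rw [Nat.card_eq_fintype_card, Γ.dart_card_eq_sum_degrees]
  have : ∀ v, Γ.degree v = 3 := fun v => by
    rw [← hcubic v, Nat.card_eq_fintype_card, SimpleGraph.card_neighborSet_eq_degree]
  simp [this, mul_comm]

theorem card_arcs [Fintype V] (hcubic : ∀ v : V, Nat.card (Γ.neighborSet v) = 3) (n : ℕ) :
    Nat.card {f : Fin (n + 2) → V // IsNArc Γ (n + 1) f} = Nat.card Γ.Dart * 2 ^ n := by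
  classical
  let p : {f : Fin (n + 2) → V // IsNArc Γ (n + 1) f} → Γ.Dart :=
    fun f => ⟨(f.1 0, f.1 1), f.2.1 0⟩
  rw [← Nat.card_congr (Equiv.sigmaFiberEquiv p), Nat.card_sigma]
  have : ∀ d : Γ.Dart, Nat.card {f // p f = d} = 2 ^ n := by
    intro d
    rw [← card_arcsFrom hcubic n d.fst d.snd d.adj]
    refine Nat.card_congr ⟨fun f => ⟨f.1.1, f.1.2, ?_, ?_⟩, fun f => ⟨⟨f.1, f.2.1⟩, ?_⟩,
      fun f => rfl, fun f => rfl⟩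
    · exact congrArg (fun d : Γ.Dart => d.fst) f.2
    · exact congrArg (fun d : Γ.Dart => d.snd) f.2
    · exact SimpleGraph.Dart.ext _ _ (Prod.ext f.2.2.1 f.2.2.2)
  rw [Finset.sum_congr rfl fun d _ => this d, Finset.sum_const, Finset.card_univ, smul_eq_mul,
    Nat.card_eq_fintype_card]

/-! ### Arc-regular groups of automorphisms -/

variable {G : Subgroup (Equiv.Perm V)}

theorem isNArc_comp {n : ℕ} {f : Fin (n + 1) → V} {g : Equiv.Perm V} (hg : IsGraphAut Γ g)
    (hf : IsNArc Γ n f) : IsNArc Γ n (fun i => g (f i)) :=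
  ⟨fun i => (hg _ _).2 (hf.1 i), fun i j hij h => hf.2 i j hij (g.injective h)⟩

theorem card_eq_card_arcs (hGaut : ∀ g ∈ G, IsGraphAut Γ g) {n : ℕ} (hGreg : ArcRegular Γ G n)
    {a : Fin (n + 1) → V} (ha : IsNArc Γ n a) :
    Nat.card G = Nat.card {f : Fin (n + 1) → V // IsNArc Γ n f} := by
  refine Nat.card_congr (Equiv.ofBijective
    (fun g : G => ⟨fun i => (g : Equiv.Perm V) (a i), isNArc_comp (hGaut g g.2) ha⟩) ⟨?_, ?_⟩)
  · intro g h hgh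
    obtain ⟨k, -, hk⟩ := hGreg a _ ha (isNArc_comp (hGaut g g.2) ha)
    rw [hk g fun i => rfl, hk h fun i => (congrFun (congrArg Subtype.val hgh) i).symm]
  · rintro ⟨b, hb⟩
    obtain ⟨g, hg, -⟩ := hGreg a b ha hb
    exact ⟨g, Subtype.ext (funext hg)⟩

theorem dart_transitive [Fintype V] (hcubic : ∀ v : V, Nat.card (Γ.neighborSet v) = 3) {t : ℕ}
    (hGreg : ArcRegular Γ G (t + 1)) :
    ∀ u v x y : V, Γ.Adj u v → Γ.Adj x y →
      ∃ g : G, (g : Equiv.Perm V) u = x ∧ (g : Equiv.Perm V) v = y := by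
  intro u v x y huv hxy
  obtain ⟨a, ha, rfl, rfl⟩ := exists_arc_of_dart hcubic t u v huv
  obtain ⟨b, hb, rfl, rfl⟩ := exists_arc_of_dart hcubic t x y hxy
  obtain ⟨g, hg, -⟩ := hGreg a b ha hb
  exact ⟨g, hg 0, hg 1⟩

theorem vertex_transitive (hcubic : ∀ v : V, Nat.card (Γ.neighborSet v) = 3)
    (htrans : ∀ u v x y : V, Γ.Adj u v → Γ.Adj x y →
      ∃ g : G, (g : Equiv.Perm V) u = x ∧ (g : Equiv.Perm V) v = y) (x y : V) :
    ∃ g : G, (g : Equiv.Perm V) x = y := by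
  have hn : ∀ v, ∃ w, Γ.Adj v w := fun v => by
    obtain ⟨⟨w, hw⟩⟩ := (Nat.card_pos_iff.1 (by rw [hcubic v]; norm_num :
      0 < Nat.card (Γ.neighborSet v))).1
    exact ⟨w, hw⟩
  obtain ⟨x', hx⟩ := hn x
  obtain ⟨y', hy⟩ := hn y
  obtain ⟨g, hg, -⟩ := htrans x x' y y' hx hy
  exact ⟨g, hg⟩

/-- If a normal subgroup of an arc-transitive group maps some vertex to one of its neighbours, then
it is transitive on the vertices. -/
theorem transitive_of_adj (hconn : Γ.Connected)
    (htrans : ∀ u v x y : V, Γ.Adj u v → Γ.Adj x y →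
      ∃ g : G, (g : Equiv.Perm V) u = x ∧ (g : Equiv.Perm V) v = y)
    {S : Subgroup G} [hS : S.Normal] {u v : V} (huv : Γ.Adj u v)
    (h : ∃ s ∈ S, (s : Equiv.Perm V) u = v) (x y : V) :
    ∃ s ∈ S, (s : Equiv.Perm V) x = y := by
  obtain ⟨s, hs, hsu⟩ := h
  obtain ⟨p⟩ := hconn.preconnected x y
  induction p with
  | nil => exact ⟨1, S.one_mem, rfl⟩
  | @cons a b c hab _ ih =>
    obtain ⟨r, hr, hrb⟩ := ih
    obtain ⟨g, hgu, hgv⟩ := htrans u v a b huv hab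
    refine ⟨r * (g * s * g⁻¹), S.mul_mem hr (hS.conj_mem s hs g), ?_⟩
    have h1 : ((g⁻¹ : G) : Equiv.Perm V) a = u := by
      rw [← hgu]; simp
    simp only [Subgroup.coe_mul, Equiv.Perm.mul_apply, h1, hsu, hgv, hrb]

/-- If `S` is soluble, normal and vertex-transitive then `G/S` is a quotient of a vertex
stabiliser, which is soluble because its order is `3 * 2 ^ t`. -/
theorem isSolvable_of_normal_transitive [Fintype V] {t : ℕ} (hV : 0 < Nat.card V)
    (hcardG : Nat.card G = 3 * 2 ^ t * Nat.card V)
    (hG : ∀ x y : V, ∃ g : G, (g : Equiv.Perm V) x = y)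
    (S : Subgroup G) [S.Normal] (hSsol : Group.IsSolvable S)
    (hS : ∀ x y : V, ∃ s ∈ S, (s : Equiv.Perm V) x = y) : Group.IsSolvable G := by
  obtain ⟨v⟩ := (Nat.card_pos_iff.1 hV).1
  have : MulAction.IsPretransitive G V := ⟨hG⟩
  have hstab : Nat.card (MulAction.stabilizer G v) = 3 * 2 ^ t := by
    have h := (MulAction.stabilizer G v).card_mul_index
    rw [MulAction.index_stabilizer_of_transitive, hcardG] at h
    exact Nat.eq_of_mul_eq_mul_right hV h
  have h1 : Group.IsSolvable (MulAction.stabilizer G v) := isSolvable_of_card_eq hstab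
  have hsurj : Function.Surjective
      ((QuotientGroup.mk' S).comp (MulAction.stabilizer G v).subtype) := by
    intro q
    obtain ⟨g, rfl⟩ := QuotientGroup.mk'_surjective S q
    obtain ⟨s, hs, hsv⟩ := hS v ((g : Equiv.Perm V) v)
    refine ⟨⟨s⁻¹ * g, ?_⟩, ?_⟩
    · rw [MulAction.mem_stabilizer_iff, mul_smul, inv_smul_eq_iff]
      exact hsv.symm
    · have : QuotientGroup.mk' S s = 1 := (QuotientGroup.eq_one_iff s).2 hs
      simp only [MonoidHom.comp_apply, Subgroup.subtype_apply, map_mul, map_inv, this]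
      simp
  have h2 : Group.IsSolvable (G ⧸ S) := Group.isSolvable_of_surjective hsurj
  refine Group.isSolvable_of_ker_le_range S.subtype (QuotientGroup.mk' S) ?_
  rw [QuotientGroup.ker_mk', Subgroup.range_subtype]

/-! ### An inverted edge -/

/-- The action of a group of automorphisms on ordered pairs of adjacent vertices. -/
abbrev dartAction (hGaut : ∀ g ∈ G, IsGraphAut Γ g) (C : Subgroup G) : MulAction C Γ.Dart where
  smul c d := ⟨(c • d.fst, c • d.snd), (hGaut c.1 c.1.2 _ _).2 d.adj⟩
  one_smul d := SimpleGraph.Dart.ext _ _ (Prod.ext (one_smul C d.fst) (one_smul C d.snd))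
  mul_smul a b d :=
    SimpleGraph.Dart.ext _ _ (Prod.ext (mul_smul a b d.fst) (mul_smul a b d.snd))

/-- A semiregular group `C` with an odd number `m` of vertex orbits has `3 m` orbits on darts. This
is odd, so reversal of darts fixes one of these orbits; the element of `C` reversing a dart of that
orbit is an involution. -/
theorem exists_inverted_dart [Fintype V] (hcubic : ∀ v : V, Nat.card (Γ.neighborSet v) = 3)
    (hGaut : ∀ g ∈ G, IsGraphAut Γ g) {C : Subgroup G} (hC : IsSemiregular C V)
    (horb : Odd (Nat.card (MulAction.orbitRel.Quotient C V))) :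
    ∃ u v : V, Γ.Adj u v ∧ ∃ c : C, orderOf c = 2 ∧ ((c : G) : Equiv.Perm V) u = v := by
  classical
  let _ := dartAction hGaut C
  have hsemi : IsSemiregular C Γ.Dart := by
    rintro c ⟨d, hd⟩
    exact hC c ⟨d.fst, congrArg (fun d : Γ.Dart => d.fst) hd⟩
  have hV := card_eq_of_semiregular hC
  have hD := card_eq_of_semiregular hsemi
  have hodd : Odd (Nat.card (MulAction.orbitRel.Quotient C Γ.Dart)) := by
    have : Nat.card (MulAction.orbitRel.Quotient C Γ.Dart)
        = 3 * Nat.card (MulAction.orbitRel.Quotient C V) := by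
      apply Nat.eq_of_mul_eq_mul_left (Nat.card_pos (α := C))
      rw [← hD, card_dart hcubic, hV]; ring
    rw [this]
    exact (by decide : Odd 3).mul horb
  have hmap : ∀ a b : Γ.Dart, MulAction.orbitRel C Γ.Dart a b →
      MulAction.orbitRel C Γ.Dart a.symm b.symm := by
    rintro a b ⟨c, rfl⟩
    exact ⟨c, rfl⟩
  let σ : MulAction.orbitRel.Quotient C Γ.Dart → MulAction.orbitRel.Quotient C Γ.Dart :=
    Quotient.map SimpleGraph.Dart.symm hmap
  have hσ : Function.Involutive σ := by
    intro q
    induction q using Quotient.inductionOn with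
    | _ d => exact congrArg (Quotient.mk _) d.symm_symm
  have := Fintype.ofFinite (MulAction.orbitRel.Quotient C Γ.Dart)
  have : Fact (Nat.Prime 2) := ⟨Nat.prime_two⟩
  obtain ⟨q, hq⟩ := Equiv.Perm.exists_fixed_point_of_prime (p := 2) (n := 1)
    (by rw [← Nat.card_eq_fintype_card]; exact hodd.not_two_dvd_nat)
    (σ := hσ.toPerm) (by ext q; simp [pow_two, hσ q])
  induction q using Quotient.inductionOn with
  | _ d =>
    obtain ⟨c, hc⟩ : MulAction.orbitRel C Γ.Dart d.symm d := Quotient.exact hq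
    have h1 : c • d.fst = d.snd := congrArg (fun d : Γ.Dart => d.fst) hc
    have h2 : c • d.snd = d.fst := congrArg (fun d : Γ.Dart => d.snd) hc
    refine ⟨d.fst, d.snd, d.adj, c, orderOf_eq_prime (hC _ ⟨d.fst, ?_⟩) ?_, h1⟩
    · rw [pow_two, mul_smul, h1, h2]
    · rintro rfl
      rw [one_smul] at h1
      exact d.fst_ne_snd h1

end Arcs

/-- Let `Γ` be a cubic `(G, t+1)`-arc-regular connected graph with `G`
insoluble, and let `S` be the soluble radical of `G`. If `C` is a semiregular
cyclic subgroup of `G` with an odd number of orbits, then `|C ∩ S|` is odd and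
`|G/S : CS/S|₂ ⬝ |S|₂ = 2 ^ t`. -/
theorem odd_card_inter_radical_and_two_part_eq
    (t : ℕ) (V : Type*) [Fintype V] (Γ : SimpleGraph V) (hconn : Γ.Connected)
    (hcubic : ∀ v : V, Nat.card (Γ.neighborSet v) = 3)
    (G : Subgroup (Equiv.Perm V))
    (hGaut : ∀ g ∈ G, IsGraphAut Γ g)
    (hGreg : ArcRegular Γ G (t + 1))
    (hGinsol : ¬ IsSolvable ↥G)
    (S : Subgroup ↥G) [S.Normal] (hSsol : IsSolvable ↥S)
    (hSrad : ∀ M : Subgroup ↥G, M.Normal → IsSolvable ↥M → M ≤ S)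
    (C : Subgroup ↥G) (hCcyc : IsCyclic ↥C)
    (hCsemi : IsSemiregular ↥C V)
    (horb : Odd (Nat.card (MulAction.orbitRel.Quotient ↥C V))) :
    Odd (Nat.card ↥(C ⊓ S)) ∧
    twoPart (Subgroup.index (C.map (QuotientGroup.mk' S))) *
      twoPart (Nat.card ↥S) = 2 ^ t := by
  classical
  have hA := card_arcs hcubic t
  have hD := card_dart hcubic
  have hcardG : Nat.card G = 3 * 2 ^ t * Nat.card V := by
    have hne := exists_arc_of_dart hcubic t
    obtain ⟨v⟩ := hconn.nonempty
    have h3 : Nonempty (Γ.neighborSet v) := (Nat.card_pos_iff.1 (by rw [hcubic v]; norm_num)).1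
    obtain ⟨⟨w, hw⟩⟩ := h3
    obtain ⟨a, ha, -⟩ := hne v w hw
    rw [card_eq_card_arcs hGaut hGreg ha, hA, hD]
    ring
  have hVpos : 0 < Nat.card V := by
    have := hconn.nonempty
    exact Nat.card_pos
  have htrans := dart_transitive hcubic hGreg
  have hCV : Nat.card V = Nat.card C * Nat.card (MulAction.orbitRel.Quotient C V) :=
    card_eq_of_semiregular hCsemi
  have hodd : Odd (Nat.card ↥(C ⊓ S)) := by
    by_contra heven
    rw [Nat.not_odd_iff_even, even_iff_two_dvd] at heven
    obtain ⟨⟨z, hzC, hzS⟩, hz⟩ := exists_prime_orderOf_dvd_card' 2 heven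
    have hz2 : orderOf z = 2 := (Subgroup.orderOf_coe (⟨z, hzC, hzS⟩ : ↥(C ⊓ S))).trans hz
    -- `z` and the edge-inverting `c` are both the unique involution of `C`
    obtain ⟨u, v, huv, c, hc, hcu⟩ := exists_inverted_dart hcubic hGaut hCsemi horb
    have hcz : (c : G) = z := by
      have := IsCyclic.eq_of_orderOf_two (x := c) (y := ⟨z, hzC⟩) hc
        (by rw [← hz2, ← Subgroup.orderOf_coe])
      rw [this]
    have hS : ∀ x y : V, ∃ s ∈ S, (s : Equiv.Perm V) x = y :=
      transitive_of_adj hconn htrans huv ⟨z, hzS, by rw [← hcz]; exact hcu⟩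
    exact hGinsol (isSolvable_of_normal_transitive hVpos hcardG
      (vertex_transitive hcubic htrans) S hSsol hS)
  refine ⟨hodd, ?_⟩
  have hmain := index_map_mul_card S C
  rw [hcardG, hCV] at hmain
  have hCpos : 0 < Nat.card C := Nat.card_pos
  set m := Nat.card (MulAction.orbitRel.Quotient C V) with hm
  have hidx : (C.map (QuotientGroup.mk' S)).index * Nat.card S
      = 2 ^ t * (3 * m * Nat.card ↥(C ⊓ S)) := by
    apply Nat.eq_of_mul_eq_mul_right hCpos
    rw [hmain]; ring
  have hkodd : Odd (3 * m * Nat.card ↥(C ⊓ S)) := ((by decide : Odd 3).mul horb).mul hodd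
  rw [← twoPart_mul (Subgroup.index_ne_zero_of_finite) Nat.card_pos.ne', hidx,
    twoPart_pow_mul_odd t hkodd]
end
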